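/- arXiv:2409.04661 — 2 statements merged into one kernel-verified Lean document; each statement's English description precedes it below -/
import Mathlib

section
/- Let p be an odd prime, let d ≥ 1 be an integer, and let r be a unit modulo p². Then the hyper Kloosterman sum Kl_d(r; p²) is nonzero if and only if r^{(p-1)/gcd(d, p-1)} ≡ 1 (mod p). -/
open scoped BigOperators

/-- `e(x) = exp(2πix)`. -/
noncomputable def e (x : ℂ) : ℂ := Complex.exp (2 * Real.pi * Complex.I * x)

/-- The hyper Kloosterman sum of dimension `d` and modulus `M` at a unit `r` mod `M`:
`Kl_d(r; M) = Σ_{n₁⋯n_d ≡ r (M)} e((n₁+⋯+n_d)/M)`. -/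
noncomputable def Kl (d M : ℕ) (r : (ZMod M)ˣ) : ℂ :=
  ∑ᶠ n : Fin d → (ZMod M)ˣ,
    if (∏ i, n i) = r then e (((∑ i, ((n i : ZMod M)).val : ℕ) : ℂ) / M) else 0

lemma aux_pow (p : ℕ) [Fact p.Prime] (d : ℕ) (s : (ZMod p)ˣ) :
    (∃ a : (ZMod p)ˣ, a ^ d = s) ↔ s ^ ((p - 1) / Nat.gcd d (p - 1)) = 1 := by
  have hp : p.Prime := Fact.out
  have hN : Nat.card (ZMod p)ˣ = p - 1 := by
    rw [Nat.card_eq_fintype_card, ZMod.card_units]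
  have hpos : 0 < p - 1 := by have := hp.two_le; omega
  set m := (p - 1) / Nat.gcd d (p - 1) with hm
  have hmd : m ∣ p - 1 := Nat.div_dvd_of_dvd (Nat.gcd_dvd_right _ _)
  have hle : (powMonoidHom d : (ZMod p)ˣ →* (ZMod p)ˣ).range ≤
      (powMonoidHom m : (ZMod p)ˣ →* (ZMod p)ˣ).ker := by
    rintro _ ⟨a, rfl⟩
    rw [MonoidHom.mem_ker]
    simp only [powMonoidHom_apply]
    rw [← pow_mul]
    have : p - 1 ∣ d * m := by
      rw [hm, ← Nat.mul_div_assoc _ (Nat.gcd_dvd_right _ _), mul_comm,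
        Nat.mul_div_assoc _ (Nat.gcd_dvd_left _ _)]
      exact dvd_mul_right _ _
    obtain ⟨c, hc⟩ := this
    rw [hc, pow_mul, ← hN, pow_card_eq_one', one_pow]
  have heq := Subgroup.eq_of_le_of_card_ge hle (by
    rw [IsCyclic.card_powMonoidHom_range, IsCyclic.card_powMonoidHom_ker, hN,
      Nat.gcd_eq_right hmd, hm, Nat.gcd_comm])
  have h2 := SetLike.ext_iff.mp heq s
  rw [MonoidHom.mem_ker, MonoidHom.mem_range] at h2
  simpa using h2

lemma aux_nonvanish (p : ℕ) [Fact p.Prime] {ι : Type*} (A : Finset ι) (t : ι → ZMod (p ^ 2))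
    (h0 : A.Nonempty) (h1 : A.card < p) :
    ∑ a ∈ A, ZMod.stdAddChar (t a) ≠ (0 : ℂ) := by
  intro h
  have hp : p.Prime := Fact.out
  have hpos : 0 < p ^ 2 := pow_pos hp.pos 2
  have hz := Complex.isPrimitiveRoot_exp (p ^ 2) hpos.ne'
  set z := Complex.exp (2 * Real.pi * Complex.I / ((p ^ 2 : ℕ) : ℂ)) with hzdef
  have hψ : ∀ x : ZMod (p ^ 2), ZMod.stdAddChar x = z ^ x.val := by
    intro x
    have := ZMod.stdAddChar_coe (N := p ^ 2) (x.val : ℤ)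
    rw [Int.cast_natCast, ZMod.natCast_zmod_val] at this
    rw [this, hzdef, ← Complex.exp_nat_mul]
    congr 1
    push_cast
    ring
  let P : Polynomial ℤ := ∑ a ∈ A, Polynomial.X ^ (t a).val
  have hP : Polynomial.aeval z P = 0 := by
    simp only [P, map_sum, map_pow, Polynomial.aeval_X]
    rw [← h]
    exact Finset.sum_congr rfl fun a _ => (hψ _).symm
  have hdvd : Polynomial.cyclotomic (p ^ 2) ℤ ∣ P := by
    rw [Polynomial.cyclotomic_eq_minpoly hz hpos]
    exact minpoly.isIntegrallyClosed_dvd (hz.isIntegral hpos) hP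
  have hev := Polynomial.eval_dvd (x := (1 : ℤ)) hdvd
  rw [show p ^ 2 = p ^ (1 + 1) from rfl, Polynomial.eval_one_cyclotomic_prime_pow] at hev
  have hP1 : P.eval 1 = (A.card : ℤ) := by
    simp [P, Polynomial.eval_finsetSum]
  rw [hP1] at hev
  have := Nat.le_of_dvd h0.card_pos (Int.natCast_dvd_natCast.mp hev)
  omega

section aux
variable (p : ℕ) [Fact p.Prime]

abbrev auxPi : ZMod (p ^ 2) →+* ZMod p :=
  ZMod.castHom (dvd_pow_self p (by norm_num : (2 : ℕ) ≠ 0)) (ZMod p)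

lemma auxPi_ker (x : ZMod (p ^ 2)) : auxPi p x = 0 ↔ (p : ZMod (p ^ 2)) * x = 0 := by
  have hp : p.Prime := Fact.out
  have hx : ((x.val : ℕ) : ZMod (p ^ 2)) = x := ZMod.natCast_zmod_val x
  rw [← hx, map_natCast, ZMod.natCast_eq_zero_iff, ← Nat.cast_mul, ZMod.natCast_eq_zero_iff]
  generalize x.val = m
  rw [sq]
  exact (Nat.mul_dvd_mul_iff_left hp.pos).symm

lemma auxPi_mul (x y : ZMod (p ^ 2)) (hx : auxPi p x = 0) (hy : auxPi p y = 0) : x * y = 0 := by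
  have h1 : ((x.val : ℕ) : ZMod (p ^ 2)) = x := ZMod.natCast_zmod_val x
  rw [← h1, map_natCast, ZMod.natCast_eq_zero_iff] at hx
  obtain ⟨c, hc⟩ := hx
  rw [← h1, hc]
  push_cast
  rw [mul_right_comm, (auxPi_ker p y).1 hy, zero_mul]

lemma auxProd {ι : Type*} (s : Finset ι) (k : ι → ZMod (p ^ 2))
    (hk : ∀ i, auxPi p (k i) = 1) : ∏ i ∈ s, k i = 1 + ∑ i ∈ s, (k i - 1) := by
  classical
  induction s using Finset.induction_on with
  | empty => simp
  | insert a s ha ih =>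
    rw [Finset.prod_insert ha, Finset.sum_insert ha, ih]
    have := auxPi_mul p (k a - 1) (∑ i ∈ s, (k i - 1)) 
      (by rw [map_sub, hk, map_one, sub_self])
      (by rw [map_sum]; exact Finset.sum_eq_zero fun i _ => by rw [map_sub, hk, map_one, sub_self])
    linear_combination this

abbrev auxU : (ZMod (p ^ 2))ˣ →* (ZMod p)ˣ := Units.map (auxPi p : ZMod (p ^ 2) →* ZMod p)

lemma auxU_surj : Function.Surjective (auxU p) := 
  ZMod.unitsMap_surjective (dvd_pow_self p (by norm_num : (2 : ℕ) ≠ 0))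

lemma auxU_val (x : (ZMod (p ^ 2))ˣ) : ((auxU p x : (ZMod p)ˣ) : ZMod p) = auxPi p x := rfl

open Classical in
/-- The part of the Kloosterman sum over a fixed residue vector mod `p`. -/
noncomputable def auxT (d : ℕ) (r : (ZMod (p ^ 2))ˣ) (a : Fin d → (ZMod p)ˣ) : ℂ :=
  ∑ n : Fin d → (ZMod (p ^ 2))ˣ, if (∏ i, n i = r ∧ ∀ i, auxU p (n i) = a i) then
    ZMod.stdAddChar (∑ i, (n i : ZMod (p ^ 2))) else 0

open Classical in
noncomputable def auxN (d : ℕ) : ℕ :=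
  (Finset.univ.filter fun k : Fin d → (ZMod (p ^ 2))ˣ =>
    ∏ i, k i = 1 ∧ ∀ i, auxU p (k i) = 1).card

lemma auxN_pos (d : ℕ) : 0 < auxN p d := by
  classical
  unfold auxN
  exact Finset.card_pos.mpr ⟨1, by simp⟩

lemma Kl_eq (d : ℕ) (r : (ZMod (p ^ 2))ˣ) :
    Kl d (p ^ 2) r = ∑ a, auxT p d r a := by
  classical
  unfold Kl auxT
  rw [finsum_eq_sum_of_fintype, Finset.sum_comm]
  refine Finset.sum_congr rfl fun n _ => ?_
  rw [Finset.sum_eq_single (fun i => auxU p (n i))]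
  · simp only [implies_true, and_true]
    split_ifs
    · have := ZMod.stdAddChar_coe (N := p ^ 2) ((∑ i, (n i : ZMod (p ^ 2)).val : ℕ) : ℤ)
      rw [Int.cast_natCast, Nat.cast_sum] at this
      simp only [ZMod.natCast_zmod_val] at this
      rw [this, e]
      congr 1
      push_cast
      ring
    · rfl
  · intro b _ hb
    rw [if_neg]
    rintro ⟨_, h⟩
    exact hb (funext fun i => (h i).symm)
  · simp

lemma auxT_zero (d : ℕ) (r : (ZMod (p ^ 2))ˣ) (a : Fin d → (ZMod p)ˣ) (i j : Fin d)
    (hij : a i ≠ a j) : auxT p d r a = 0 := by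
  classical
  have hne : i ≠ j := fun h => hij (by rw [h])
  have hpp : (p : ZMod (p ^ 2)) * p = 0 := by
    rw [← Nat.cast_mul, ZMod.natCast_eq_zero_iff, sq]
  let u : (ZMod (p ^ 2))ˣ := ⟨1 + p, 1 - p, by linear_combination -hpp, by linear_combination -hpp⟩
  have hu1 : (u : ZMod (p ^ 2)) = 1 + p := rfl
  have hu2 : ((u⁻¹ : (ZMod (p ^ 2))ˣ) : ZMod (p ^ 2)) = 1 - p := rfl
  have hpi : auxPi p (p : ZMod (p ^ 2)) = 0 := by simp
  have hu : auxU p u = 1 := by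
    ext; rw [auxU_val, hu1, map_add, hpi]; simp
  let k : Fin d → (ZMod (p ^ 2))ˣ := Pi.mulSingle i u * Pi.mulSingle j u⁻¹
  have hk1 : ∏ l, k l = 1 := by
    simp [k, Finset.prod_mul_distrib, Fintype.prod_pi_mulSingle]
  have hk2 : ∀ l, auxU p (k l) = 1 := by
    intro l
    simp only [k, Pi.mul_apply, map_mul, Pi.mulSingle_apply]
    split_ifs <;> simp [hu]
  have hkv : ∀ l, (k l : ZMod (p ^ 2)) = 1 + (if l = i then (p : ZMod (p ^ 2)) else 0)
      - (if l = j then (p : ZMod (p ^ 2)) else 0) := by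
    intro l
    simp only [k, Pi.mul_apply, Pi.mulSingle_apply, Units.val_mul]
    by_cases h1 : l = i
    · have h2 : l ≠ j := fun h => hne (h1 ▸ h)
      simp [h1, hne, hu1]
    · by_cases h2 : l = j
      · simp [h2, hne.symm, hu2]
      · simp [h1, h2]
  obtain ⟨x, hx⟩ := auxU_surj p (a i)
  obtain ⟨y, hy⟩ := auxU_surj p (a j)
  set c : ZMod (p ^ 2) := (p : ZMod (p ^ 2)) * ((x : ZMod (p ^ 2)) - (y : ZMod (p ^ 2))) with hc
  have hc0 : c ≠ 0 := by
    rw [hc, Ne, ← auxPi_ker, map_sub, sub_eq_zero, ← auxU_val, ← auxU_val, hx, hy]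
    exact fun h => hij (Units.ext h)
  have key : auxT p d r a = ZMod.stdAddChar c * auxT p d r a := by
    conv_lhs => unfold auxT
    rw [← Equiv.sum_comp (Equiv.mulLeft k), auxT, Finset.mul_sum]
    refine Finset.sum_congr rfl fun n _ => ?_
    simp only [Equiv.coe_mulLeft, Pi.mul_apply, map_mul, hk2, one_mul, Finset.prod_mul_distrib,
      hk1]
    split_ifs with h
    · rw [← AddChar.map_add_eq_mul]
      congr 1
      have hi : (p : ZMod (p ^ 2)) * (n i - x) = 0 := by
        rw [← auxPi_ker, map_sub, sub_eq_zero, ← auxU_val, ← auxU_val, hx, h.2]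
      have hj : (p : ZMod (p ^ 2)) * (n j - y) = 0 := by
        rw [← auxPi_ker, map_sub, sub_eq_zero, ← auxU_val, ← auxU_val, hy, h.2]
      simp only [Units.val_mul, hkv, sub_mul, add_mul, one_mul, Finset.sum_sub_distrib,
        Finset.sum_add_distrib, ite_mul, zero_mul, Finset.sum_ite_eq', Finset.mem_univ, if_true]
      rw [hc]
      linear_combination hi - hj
    · simp
  have h1 : (ZMod.stdAddChar c : ℂ) ≠ 1 := by
    rw [← AddChar.map_zero_eq_one (ZMod.stdAddChar (N := p ^ 2))]
    exact fun h => hc0 (ZMod.injective_stdAddChar h)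
  have h2 : ((ZMod.stdAddChar c : ℂ) - 1) * auxT p d r a = 0 := by linear_combination -key
  exact (mul_eq_zero.mp h2).resolve_left (sub_ne_zero.mpr h1)

lemma auxT_none (d : ℕ) (r : (ZMod (p ^ 2))ˣ) (α : (ZMod p)ˣ) (h : α ^ d ≠ auxU p r) :
    auxT p d r (fun _ => α) = 0 := by
  unfold auxT
  refine Finset.sum_eq_zero fun n _ => if_neg ?_
  rintro ⟨h1, h2⟩
  apply h
  rw [← h1, map_prod]
  simp [h2]

lemma auxT_const (d : ℕ) (hd : 1 ≤ d) (r : (ZMod (p ^ 2))ˣ) (α : (ZMod p)ˣ)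
    (h : α ^ d = auxU p r) :
    ∃ t : ZMod (p ^ 2), auxT p d r (fun _ => α) = auxN p d * ZMod.stdAddChar t := by
  classical
  obtain ⟨x, hx⟩ := auxU_surj p α
  let i0 : Fin d := ⟨0, hd⟩
  let n0 : Fin d → (ZMod (p ^ 2))ˣ := (fun _ => x) * Pi.mulSingle i0 (r * (x ^ d)⁻¹)
  have hn1 : ∏ i, n0 i = r := by
    simp [n0, Finset.prod_mul_distrib, Fintype.prod_pi_mulSingle]
  have hn2 : ∀ i, auxU p (n0 i) = α := by
    intro i
    simp only [n0, Pi.mul_apply, map_mul, Pi.mulSingle_apply, hx]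
    split_ifs
    · rw [map_mul, map_inv, map_pow, hx, h]; simp
    · simp
  refine ⟨∑ i, (n0 i : ZMod (p ^ 2)), ?_⟩
  unfold auxT auxN
  rw [← Equiv.sum_comp (Equiv.mulLeft n0), ← nsmul_eq_mul, ← Finset.sum_const, Finset.sum_filter]
  refine Finset.sum_congr rfl fun k _ => ?_
  simp only [Equiv.coe_mulLeft, Pi.mul_apply, map_mul, hn2, Finset.prod_mul_distrib, hn1,
    mul_eq_left]
  split_ifs with hk
  · congr 1
    have hk1 : ∀ i, auxPi p (k i : ZMod (p ^ 2)) = 1 := fun i => by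
      rw [← auxU_val, hk.2 i]; rfl
    have hs := auxProd p Finset.univ (fun i => (k i : ZMod (p ^ 2))) hk1
    have hk3 := congrArg (Units.val) hk.1
    rw [Units.coe_prod, hs, Units.val_one] at hk3
    have hk4 : ∑ i, ((k i : ZMod (p ^ 2)) - 1) = 0 := by linear_combination hk3
    rw [← sub_eq_zero, ← Finset.sum_sub_distrib, ← mul_zero (x : ZMod (p ^ 2)), ← hk4,
      Finset.mul_sum]
    refine Finset.sum_congr rfl fun i _ => ?_
    have := auxPi_mul p ((n0 i : ZMod (p ^ 2)) - x) ((k i : ZMod (p ^ 2)) - 1)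
      (by rw [map_sub, ← auxU_val, ← auxU_val, hn2, hx, sub_self]) (by rw [map_sub, hk1]; simp)
    rw [Units.val_mul]
    linear_combination this
  · rfl

end aux

theorem stmt0 (p : ℕ) [Fact p.Prime] (hodd : Odd p) (d : ℕ) (hd : 1 ≤ d)
    (r : (ZMod (p ^ 2))ˣ) :
    Kl d (p ^ 2) r ≠ 0 ↔
      (ZMod.castHom (dvd_pow_self p (by norm_num : (2 : ℕ) ≠ 0)) (ZMod p)
          (r : ZMod (p ^ 2))) ^ ((p - 1) / Nat.gcd d (p - 1)) = 1 := by
  classical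
  have hp : p.Prime := Fact.out
  have hR := aux_pow p d (auxU p r)
  rw [Units.ext_iff, Units.val_pow_eq_pow_val, auxU_val, Units.val_one] at hR
  rw [← hR]
  let i0 : Fin d := ⟨0, hd⟩
  have hK : Kl d (p ^ 2) r = ∑ α : (ZMod p)ˣ, auxT p d r (fun _ => α) := by
    rw [Kl_eq]
    symm
    refine Finset.sum_of_injOn (fun α _ => α) ?_ ?_ ?_ ?_
    · intro x _ y _ hxy
      exact congrFun hxy i0
    · intro x _; simp
    · intro a _ ha
      by_contra hne
      apply ha
      refine ⟨a i0, by simp, ?_⟩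
      funext i
      by_contra hi
      exact hne (auxT_zero p d r a i0 i hi)
    · intro _ _; rfl
  constructor
  · intro hne
    by_contra hno
    push Not at hno
    apply hne
    rw [hK]
    exact Finset.sum_eq_zero fun α _ => auxT_none p d r α (hno α)
  · rintro ⟨β, hβ⟩
    have hex : ∀ α : (ZMod p)ˣ, ∃ t : ZMod (p ^ 2), α ^ d = auxU p r →
        auxT p d r (fun _ => α) = auxN p d * ZMod.stdAddChar t := by
      intro α
      by_cases h : α ^ d = auxU p r
      · obtain ⟨t, ht⟩ := auxT_const p d hd r α h
        exact ⟨t, fun _ => ht⟩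
      · exact ⟨0, fun h' => absurd h' h⟩
    choose t ht using hex
    let A := Finset.univ.filter fun α : (ZMod p)ˣ => α ^ d = auxU p r
    have hA : Kl d (p ^ 2) r = auxN p d * ∑ α ∈ A, ZMod.stdAddChar (t α) := by
      rw [hK, Finset.mul_sum, Finset.sum_filter]
      refine Finset.sum_congr rfl fun α _ => ?_
      split_ifs with h
      · exact ht α h
      · exact auxT_none p d r α h
    rw [hA]
    refine mul_ne_zero (by exact_mod_cast (auxN_pos p d).ne') ?_
    refine aux_nonvanish p A t ⟨β, by simp [A, hβ]⟩ ?_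
    have h1 := Finset.card_le_univ A
    rw [ZMod.card_units] at h1
    have := hp.two_le
    omega
end

section
/- Let K be a totally real number field of degree d that is Galois over ℚ with solvable Galois group, let p be an odd prime with p ∤ d_K, and fix an integer n ≥ 1. Then there exists a nonzero constant C ∈ ℂ, depending only on K and n, such that for every primitive Dirichlet character ψ modulo p^n one has τ(ψ∘N) = C · ψ(d_K) · τ(ψ)^d, where τ(ψ) = Σ_{a mod p^n} ψ(a) e(a/p^n) is the Dirichlet Gauss sum of ψ. -/
open scoped BigOperators

/-- Gauss sum of a Dirichlet character mod `M`: `τ(φ) = Σ_{a mod M} φ(a) e(a/M)`. -/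
noncomputable def tau {M : ℕ} (φ : DirichletCharacter ℂ M) : ℂ :=
  ∑ᶠ a : ZMod M, φ a * e ((a.val : ℂ) / M)

/-- A choice of representative in `R` of a residue class in `R ⧸ I`. -/
noncomputable def rep {R : Type*} [CommRing R] {I : Ideal R} (x : R ⧸ I) : R :=
  Function.surjInv Ideal.Quotient.mk_surjective x

/-- The Gauss sum `τ(φ∘N)` of the cyclotomic ray class character `φ ∘ N_{K/ℚ}` over `K`
attached to a Dirichlet character `φ` mod `M`:
`τ(φ∘N) = φ(d_K) Σ_{α ∈ (O_K/M O_K)ˣ} φ(N(α)) e(Tr(α)/M)`,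
where the norm and trace of a residue class are computed on a representative and then
reduced mod `M`. -/
noncomputable def tauN (K : Type*) [Field K] [NumberField K] (M : ℕ)
    (φ : DirichletCharacter ℂ M) : ℂ :=
  φ ((NumberField.discr K : ZMod M)) *
    ∑ᶠ α : (NumberField.RingOfIntegers K ⧸
        Ideal.span {(M : NumberField.RingOfIntegers K)})ˣ,
      φ (((Algebra.norm ℤ
            (rep (α : NumberField.RingOfIntegers K ⧸
              Ideal.span {(M : NumberField.RingOfIntegers K)})) : ℤ) : ZMod M)) *
        e ((((Algebra.trace ℤ (NumberField.RingOfIntegers K)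
            (rep (α : NumberField.RingOfIntegers K ⧸
              Ideal.span {(M : NumberField.RingOfIntegers K)})) : ℤ) : ZMod M).val : ℂ) / M)

open scoped BigOperators

namespace HD
open Polynomial

section
variable {F : Type*} [Field F]

/-- multiplicative weight on monic polynomials -/
noncomputable def lam (μ : MulChar F ℂ) (χ : AddChar F ℂ) (f : F[X]) : ℂ :=
  μ ((-1) ^ f.natDegree * f.coeff 0) * χ (-f.nextCoeff)

lemma lam_one (μ : MulChar F ℂ) (χ : AddChar F ℂ) : lam μ χ 1 = 1 := by
  simp [lam, nextCoeff]

lemma lam_mul (μ : MulChar F ℂ) (χ : AddChar F ℂ) {f g : F[X]} (hf : f.Monic) (hg : g.Monic) :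
    lam μ χ (f * g) = lam μ χ f * lam μ χ g := by
  unfold lam
  rw [hf.nextCoeff_mul hg, hf.natDegree_mul hg, mul_coeff_zero, neg_add, AddChar.map_add_eq_mul,
    pow_add, mul_mul_mul_comm, map_mul]
  ring

lemma lam_pow (μ : MulChar F ℂ) (χ : AddChar F ℂ) {f : F[X]} (hf : f.Monic) (j : ℕ) :
    lam μ χ (f ^ j) = lam μ χ f ^ j := by
  induction j with
  | zero => simp [lam_one]
  | succ j ih => rw [pow_succ, lam_mul μ χ (hf.pow j) hf, ih, pow_succ]

variable [Finite F]

lemma finite_monic (k : ℕ) : {f : F[X] | f.Monic ∧ f.natDegree = k}.Finite := by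
  have : Finite (degreeLT F k) := Finite.of_equiv _ (degreeLTEquiv F k).symm.toEquiv
  have h2 := Finite.of_equiv _ (monicEquivDegreeLT (R := F) k).symm
  exact Set.finite_coe_iff.mp h2

/-- monic polynomials of degree `k` -/
noncomputable def monics (F : Type*) [Field F] [Finite F] (k : ℕ) : Finset F[X] :=
  (finite_monic (F := F) k).toFinset

lemma mem_monics {k : ℕ} {f : F[X]} : f ∈ monics F k ↔ f.Monic ∧ f.natDegree = k := by
  simp [monics]

open Classical in
/-- monic irreducible polynomials of degree at most `N` -/
noncomputable def irrs (F : Type*) [Field F] [Finite F] (N : ℕ) : Finset F[X] :=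
  ((Finset.range (N + 1)).biUnion (monics F)).filter Irreducible

lemma mem_irrs {N : ℕ} {f : F[X]} :
    f ∈ irrs F N ↔ f.Monic ∧ Irreducible f ∧ f.natDegree ≤ N := by
  simp only [irrs, Finset.mem_filter, Finset.mem_biUnion, Finset.mem_range, mem_monics]
  constructor
  · rintro ⟨⟨a, h1, h2, h3⟩, h4⟩
    exact ⟨h2, h4, by omega⟩
  · rintro ⟨h1, h2, h3⟩
    exact ⟨⟨_, by omega, h1, rfl⟩, h2⟩

/-- sum of weights -/
noncomputable def A (μ : MulChar F ℂ) (χ : AddChar F ℂ) (k : ℕ) : ℂ :=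
  ∑ f ∈ monics F k, lam μ χ f

lemma A_zero (μ : MulChar F ℂ) (χ : AddChar F ℂ) : A μ χ 0 = 1 := by
  have : monics F 0 = {1} := by
    ext f
    rw [mem_monics, Finset.mem_singleton]
    constructor
    · rintro ⟨h1, h2⟩
      exact h1.natDegree_eq_zero.mp h2
    · rintro rfl; simp
  rw [A, this, Finset.sum_singleton, lam_one]

lemma A_one [Fintype F] (μ : MulChar F ℂ) (χ : AddChar F ℂ) :
    A μ χ 1 = ∑ a : F, μ a * χ a := by
  symm
  refine Finset.sum_bij (fun a _ => X - C a) ?_ ?_ ?_ ?_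
  · intro a _
    rw [mem_monics]
    exact ⟨monic_X_sub_C a, natDegree_X_sub_C a⟩
  · intro a _ b _ h
    simpa using h
  · intro f hf
    rw [mem_monics] at hf
    refine ⟨- f.coeff 0, Finset.mem_univ _, ?_⟩
    rw [eq_X_add_C_of_natDegree_le_one hf.2.le]
    have := hf.1.coeff_natDegree
    rw [hf.2] at this
    simp [this]
  · intro a _
    simp [lam]

lemma A_ge_two (μ : MulChar F ℂ) (χ : AddChar F ℂ) (hχ : ∃ c, χ c ≠ 1) (k : ℕ) (hk : 2 ≤ k) :
    A μ χ k = 0 := by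
  obtain ⟨c, hc⟩ := hχ
  have key : ∀ (b : F) (f : F[X]), f ∈ monics F k →
      (f + C b * X ^ (k - 1)) ∈ monics F k ∧
      lam μ χ (f + C b * X ^ (k - 1)) = χ (-b) * lam μ χ f := by
    intro b f hf
    rw [mem_monics] at hf ⊢
    obtain ⟨h1, h2⟩ := hf
    have hd : (C b * X ^ (k - 1)).degree < f.degree := by
      rw [degree_eq_natDegree h1.ne_zero, h2]
      refine lt_of_le_of_lt (degree_C_mul_X_pow_le _ _) ?_
      exact_mod_cast (by omega : k - 1 < k)
    have h3 : (f + C b * X ^ (k - 1)).natDegree = k := by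
      rw [natDegree_eq_of_degree_eq (degree_add_eq_left_of_degree_lt hd), h2]
    refine ⟨⟨h1.add_of_left hd, h3⟩, ?_⟩
    unfold lam
    rw [nextCoeff_of_natDegree_pos (by omega), nextCoeff_of_natDegree_pos (by omega), h3, h2]
    have : (0 : ℕ) ≠ k - 1 := by omega
    simp only [coeff_add, coeff_C_mul, coeff_X_pow, if_neg this, mul_zero, add_zero, if_true,
      mul_one]
    rw [neg_add, AddChar.map_add_eq_mul]
    ring
  have h : A μ χ k = χ c * A μ χ k := by
    conv_rhs => rw [A, Finset.mul_sum]
    unfold A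
    symm
    refine Finset.sum_bij' (fun f _ => f + C (-c) * X ^ (k - 1))
      (fun f _ => f + C c * X ^ (k - 1)) ?_ ?_ ?_ ?_ ?_
    · intro f hf; exact (key _ f hf).1
    · intro f hf; exact (key _ f hf).1
    · intro f hf; simp
    · intro f hf; simp
    · intro f hf; rw [(key _ f hf).2, neg_neg]
  have : (1 - χ c) * A μ χ k = 0 := by linear_combination h
  rcases mul_eq_zero.mp this with h | h
  · exact absurd (by linear_combination -h) hc
  · exact h

open Classical in
lemma degree_count {N n : ℕ} (hn : n ≤ N) {f : F[X]} (hf : f ∈ monics F n) :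
    n = ∑ P ∈ irrs F N, ∑ j ∈ Finset.Icc 1 N, if P ^ j ∣ f then P.natDegree else 0 := by
  rw [mem_monics] at hf
  obtain ⟨h1, h2⟩ := hf
  set s := UniqueFactorizationMonoid.normalizedFactors f with hs
  have hprod : s.prod = f := by
    have := UniqueFactorizationMonoid.prod_normalizedFactors_eq h1.ne_zero
    rw [this, h1.normalize_eq_self]
  have hmem : ∀ P ∈ s, P ∈ irrs F N ∧ P ∣ f := by
    intro P hP
    have hdv := UniqueFactorizationMonoid.dvd_of_mem_normalizedFactors hP
    have hirr := UniqueFactorizationMonoid.irreducible_of_normalized_factor P hP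
    rw [mem_irrs]
    refine ⟨⟨?_, hirr, ?_⟩, hdv⟩
    · have := UniqueFactorizationMonoid.normalize_normalized_factor P hP
      rw [← this]
      exact monic_normalize hirr.ne_zero
    · exact (natDegree_le_of_dvd hdv h1.ne_zero).trans (by omega)
  have hdeg : n = (s.map natDegree).sum := by
    rw [← natDegree_multiset_prod, hprod, h2]
    intro h0
    have := (mem_irrs.mp (hmem 0 h0).1).1
    exact this.ne_zero rfl
  have hsub : s.toFinset ⊆ irrs F N := fun P hP => (hmem P (Multiset.mem_toFinset.mp hP)).1
  conv_lhs => rw [hdeg, Finset.sum_multiset_map_count]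
  rw [Finset.sum_subset hsub]
  · refine Finset.sum_congr rfl fun P hP => ?_
    obtain ⟨hm, hi, hd⟩ := mem_irrs.mp hP
    have hmul := UniqueFactorizationMonoid.emultiplicity_eq_count_normalizedFactors hi h1.ne_zero
    rw [hm.normalize_eq_self] at hmul
    have hdvd : ∀ j, P ^ j ∣ f ↔ j ≤ s.count P := by
      intro j
      rw [pow_dvd_iff_le_emultiplicity, hmul]
      exact_mod_cast Iff.rfl
    have hle : s.count P ≤ N := by
      have h3 : P ^ s.count P ∣ f := (hdvd _).mpr le_rfl
      have h4 := natDegree_le_of_dvd h3 h1.ne_zero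
      rw [hm.natDegree_pow, h2] at h4
      have := hi.natDegree_pos
      nlinarith
    rw [← Finset.sum_filter, Finset.sum_const]
    congr 1
    have : (Finset.Icc 1 N).filter (fun j => P ^ j ∣ f) = Finset.Icc 1 (s.count P) := by
      ext j
      simp only [Finset.mem_filter, Finset.mem_Icc, hdvd]
      omega
    rw [this]; simp
  · intro P _ hP
    rw [Multiset.mem_toFinset] at hP
    rw [Multiset.count_eq_zero_of_notMem hP, zero_smul]

open Classical in
lemma sum_dvd (μ : MulChar F ℂ) (χ : AddChar F ℂ) (n : ℕ) {Q : F[X]} (hQ : Q.Monic) :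
    ∑ f ∈ (monics F n).filter (fun f => Q ∣ f), lam μ χ f =
      if Q.natDegree ≤ n then lam μ χ Q * A μ χ (n - Q.natDegree) else 0 := by
  split_ifs with h
  · rw [A, Finset.mul_sum]
    symm
    refine Finset.sum_bij (fun g _ => Q * g) ?_ ?_ ?_ ?_
    · intro g hg
      rw [mem_monics] at hg
      rw [Finset.mem_filter, mem_monics]
      refine ⟨⟨hQ.mul hg.1, ?_⟩, dvd_mul_right _ _⟩
      rw [hQ.natDegree_mul hg.1, hg.2]; omega
    · intro a _ b _ hab
      exact mul_left_cancel₀ hQ.ne_zero hab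
    · intro f hf
      rw [Finset.mem_filter, mem_monics] at hf
      obtain ⟨⟨h1, h2⟩, g, rfl⟩ := hf
      have hg : g.Monic := hQ.of_mul_monic_left h1
      refine ⟨g, ?_, rfl⟩
      rw [mem_monics]
      refine ⟨hg, ?_⟩
      rw [hQ.natDegree_mul hg] at h2; omega
    · intro g hg
      rw [mem_monics] at hg
      rw [lam_mul μ χ hQ hg.1]
  · apply Finset.sum_eq_zero
    intro f hf
    rw [Finset.mem_filter, mem_monics] at hf
    exfalso
    have := natDegree_le_of_dvd hf.2 hf.1.1.ne_zero
    omega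

/-- power sums -/
noncomputable def S (μ : MulChar F ℂ) (χ : AddChar F ℂ) (N r : ℕ) : ℂ :=
  ∑ P ∈ irrs F N, ∑ j ∈ Finset.Icc 1 N,
    if j * P.natDegree = r then (P.natDegree : ℂ) * lam μ χ P ^ j else 0

lemma newton (μ : MulChar F ℂ) (χ : AddChar F ℂ) {N n : ℕ} (hn : n ≤ N) :
    (n : ℂ) * A μ χ n = ∑ P ∈ irrs F N, ∑ j ∈ Finset.Icc 1 N,
      if j * P.natDegree ≤ n then
        (P.natDegree : ℂ) * lam μ χ P ^ j * A μ χ (n - j * P.natDegree) else 0 := by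
  classical
  have h1 : (n : ℂ) * A μ χ n = ∑ f ∈ monics F n, ∑ P ∈ irrs F N, ∑ j ∈ Finset.Icc 1 N,
      (if P ^ j ∣ f then (P.natDegree : ℂ) * lam μ χ f else 0) := by
    rw [A, Finset.mul_sum]
    refine Finset.sum_congr rfl fun f hf => ?_
    have := degree_count hn hf
    have h2 : (n : ℂ) = ∑ P ∈ irrs F N, ∑ j ∈ Finset.Icc 1 N,
        if P ^ j ∣ f then (P.natDegree : ℂ) else 0 := by
      conv_lhs => rw [this]
      push_cast
      rfl
    rw [h2, Finset.sum_mul]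
    refine Finset.sum_congr rfl fun P _ => ?_
    rw [Finset.sum_mul]
    refine Finset.sum_congr rfl fun j _ => ?_
    split_ifs <;> simp
  rw [h1, Finset.sum_comm]
  refine Finset.sum_congr rfl fun P hP => ?_
  rw [Finset.sum_comm]
  refine Finset.sum_congr rfl fun j _ => ?_
  have hm := (mem_irrs.mp hP).1
  rw [← Finset.sum_filter, ← Finset.mul_sum, sum_dvd μ χ n (hm.pow j), hm.natDegree_pow,
    lam_pow μ χ hm]
  split_ifs <;> ring

lemma S_one (μ : MulChar F ℂ) (χ : AddChar F ℂ) {N : ℕ} (hN : 1 ≤ N) :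
    S μ χ N 1 = A μ χ 1 := by
  have := newton μ χ hN
  rw [Nat.cast_one, one_mul] at this
  rw [this, S]
  refine Finset.sum_congr rfl fun P hP => Finset.sum_congr rfl fun j hj => ?_
  have h1 := (mem_irrs.mp hP).2.1.natDegree_pos
  have h2 := (Finset.mem_Icc.mp hj).1
  have h3 : 1 ≤ j * P.natDegree := Nat.mul_pos h2 h1
  by_cases h : j * P.natDegree = 1
  · simp [h, A_zero]
  · rw [if_neg h, if_neg (by omega)]

lemma S_succ (μ : MulChar F ℂ) (χ : AddChar F ℂ) (hχ : ∃ c, χ c ≠ 1) {N n : ℕ}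
    (hn1 : 1 ≤ n) (hn : n + 1 ≤ N) :
    S μ χ N (n + 1) = - A μ χ 1 * S μ χ N n := by
  have := newton μ χ hn
  rw [A_ge_two μ χ hχ _ (by omega), mul_zero] at this
  have h2 : S μ χ N (n + 1) + A μ χ 1 * S μ χ N n = 0 := by
    rw [this, S, S, Finset.mul_sum, ← Finset.sum_add_distrib]
    refine Finset.sum_congr rfl fun P hP => ?_
    rw [Finset.mul_sum, ← Finset.sum_add_distrib]
    refine Finset.sum_congr rfl fun j hj => ?_
    rcases lt_trichotomy (j * P.natDegree) n with h | h | h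
    · rw [if_neg (by omega), if_neg (by omega), if_pos (by omega),
        A_ge_two μ χ hχ (n + 1 - j * P.natDegree) (by omega)]
      ring
    · rw [if_neg (by omega), if_pos (by omega), if_pos (by omega), h,
        show n + 1 - n = 1 by omega]
      ring
    · by_cases h3 : j * P.natDegree = n + 1
      · rw [if_pos h3, if_neg (by omega), if_pos (by omega), h3, Nat.sub_self, A_zero]
        ring
      · rw [if_neg h3, if_neg (by omega), if_neg (by omega)]
        ring
  linear_combination h2

lemma S_eq (μ : MulChar F ℂ) (χ : AddChar F ℂ) (hχ : ∃ c, χ c ≠ 1) {N n : ℕ}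
    (hn : n + 1 ≤ N) :
    S μ χ N (n + 1) = (-1) ^ n * A μ χ 1 ^ (n + 1) := by
  induction n with
  | zero => simp [S_one μ χ hn]
  | succ n ih =>
    rw [S_succ μ χ hχ (by omega) hn, ih (by omega)]
    ring

end

section
variable {F E : Type*} [Field F] [Fintype F] [Field E] [Fintype E] [Algebra F E]

lemma finrank_adjoin_mul (α : E) :
    (minpoly F α).natDegree * Module.finrank (IntermediateField.adjoin F {α}) E
      = Module.finrank F E := by
  have hint : IsIntegral F α := Algebra.IsIntegral.isIntegral α
  rw [← IntermediateField.adjoin.finrank hint]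
  exact Module.finrank_mul_finrank _ _ _

lemma term_eq (μ : MulChar F ℂ) (χ : AddChar F ℂ) (α : E) :
    μ (Algebra.norm F α) * χ (Algebra.trace F E α) =
      lam μ χ (minpoly F α) ^ (Module.finrank (IntermediateField.adjoin F {α}) E) := by
  have hint : IsIntegral F α := Algebra.IsIntegral.isIntegral α
  have h1 := Algebra.PowerBasis.norm_gen_eq_coeff_zero_minpoly
    (IntermediateField.adjoin.powerBasis hint)
  have h2 := PowerBasis.trace_gen_eq_nextCoeff_minpoly
    (IntermediateField.adjoin.powerBasis hint)
  rw [IntermediateField.adjoin.powerBasis_gen, IntermediateField.minpoly_gen] at h1 h2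
  rw [IntermediateField.adjoin.powerBasis_dim] at h1
  rw [Algebra.norm_eq_norm_adjoin F α, trace_eq_trace_adjoin F α, h1, h2, AddChar.map_nsmul_eq_pow,
    map_pow, ← mul_pow, lam]

open Classical in
lemma card_minpoly {P : F[X]} (hm : P.Monic) (hi : Irreducible P)
    (hd : P.natDegree ∣ Module.finrank F E) :
    (Finset.univ.filter (fun α : E => minpoly F α = P)).card = P.natDegree := by
  have hsp : (P.map (algebraMap F E)).Splits := by
    have h1 := hi.natDegree_dvd_iff_dvd_X_pow_card_pow_sub_X.mp hd
    rw [← Module.natCard_eq_pow_finrank (K := F) (V := E), Nat.card_eq_fintype_card] at h1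
    refine Splits.of_dvd ?_ ?_ (Polynomial.map_dvd (algebraMap F E) h1)
    · exact (FiniteField.isSplittingField_sub E F).splits
    · exact map_ne_zero (FiniteField.X_pow_card_sub_X_ne_zero _ Fintype.one_lt_card)
  have hsep : P.Separable := PerfectField.separable_of_irreducible hi
  rw [← card_rootSet_eq_natDegree hsep hsp, ← Set.toFinset_card]
  congr 1
  ext α
  simp only [Finset.mem_filter, Finset.mem_univ, true_and, Set.mem_toFinset, mem_rootSet]
  constructor
  · rintro rfl
    exact ⟨hi.ne_zero, minpoly.aeval F α⟩
  · rintro ⟨_, h⟩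
    exact (minpoly.eq_of_irreducible_of_monic hi h hm).symm

lemma sum_eq_S (μ : MulChar F ℂ) (χ : AddChar F ℂ) :
    ∑ α : E, μ (Algebra.norm F α) * χ (Algebra.trace F E α) =
      S μ χ (Module.finrank F E) (Module.finrank F E) := by
  classical
  have hpos : 0 < Module.finrank F E := Module.finrank_pos
  have hmaps : ∀ α ∈ (Finset.univ : Finset E), minpoly F α ∈ irrs F (Module.finrank F E) := by
    intro α _
    have hint : IsIntegral F α := Algebra.IsIntegral.isIntegral α
    rw [mem_irrs]
    exact ⟨minpoly.monic hint, minpoly.irreducible hint, minpoly.natDegree_le α⟩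
  rw [← Finset.sum_fiberwise_of_maps_to hmaps, S]
  refine Finset.sum_congr rfl fun P hP => ?_
  obtain ⟨hm, hi, hle⟩ := mem_irrs.mp hP
  have hP0 := hi.natDegree_pos
  by_cases hd : P.natDegree ∣ Module.finrank F E
  · obtain ⟨k, hk⟩ := hd
    have hk0 : 0 < k := Nat.pos_of_ne_zero (by rintro rfl; omega)
    have h1 : ∀ α ∈ Finset.univ.filter (fun α : E => minpoly F α = P),
        μ (Algebra.norm F α) * χ (Algebra.trace F E α) = lam μ χ P ^ k := by
      intro α hα
      have hα := (Finset.mem_filter.mp hα).2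
      rw [term_eq, hα]
      congr 1
      have := finrank_adjoin_mul (F := F) α
      rw [hα, hk] at this
      exact Nat.eq_of_mul_eq_mul_left hP0 this
    rw [Finset.sum_congr rfl h1, Finset.sum_const, card_minpoly hm hi ⟨k, hk⟩,
      Finset.sum_eq_single k]
    · rw [if_pos (by rw [hk, mul_comm]), nsmul_eq_mul]
    · intro j _ hj
      rw [if_neg]
      intro h
      apply hj
      rw [hk, mul_comm] at h
      exact Nat.eq_of_mul_eq_mul_left hP0 h
    · intro h
      exfalso
      apply h
      rw [Finset.mem_Icc, hk]
      exact ⟨hk0, Nat.le_mul_of_pos_left _ hP0⟩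
  · rw [Finset.sum_eq_zero, Finset.sum_eq_zero]
    · intro j _
      rw [if_neg]
      intro h
      exact hd ⟨j, by rw [← h, mul_comm]⟩
    · intro α hα
      exfalso
      apply hd
      rw [← (Finset.mem_filter.mp hα).2]
      exact ⟨_, (finrank_adjoin_mul (F := F) α).symm⟩

theorem hasseDavenport (μ : MulChar F ℂ) (χ : AddChar F ℂ) (hχ : ∃ c, χ c ≠ 1) :
    ∑ α : E, μ (Algebra.norm F α) * χ (Algebra.trace F E α) =
      (-1) ^ (Module.finrank F E - 1) * (∑ a : F, μ a * χ a) ^ (Module.finrank F E) := by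
  have hpos : 0 < Module.finrank F E := Module.finrank_pos
  rw [sum_eq_S]
  obtain ⟨n, hn⟩ : ∃ n, Module.finrank F E = n + 1 := ⟨Module.finrank F E - 1, by omega⟩
  rw [hn, S_eq μ χ hχ le_rfl, A_one, Nat.add_sub_cancel]

end
end HD
namespace HD

/-- Gauss sum of a finite algebra -/
noncomputable def Gs (Z R : Type*) [CommRing Z] [CommRing R] [Algebra Z R] (μ : MulChar Z ℂ)
    (χ : AddChar Z ℂ) : ℂ :=
  ∑ᶠ x : R, μ (Algebra.norm Z x) * χ (Algebra.trace Z R x)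

lemma Gs_eq_sum (Z R : Type*) [CommRing Z] [CommRing R] [Algebra Z R] [Fintype R]
    (μ : MulChar Z ℂ) (χ : AddChar Z ℂ) :
    Gs Z R μ χ = ∑ x : R, μ (Algebra.norm Z x) * χ (Algebra.trace Z R x) :=
  finsum_eq_sum_of_fintype _

lemma Gs_self (Z : Type*) [CommRing Z] [Fintype Z] (μ : MulChar Z ℂ) (χ : AddChar Z ℂ) :
    Gs Z Z μ χ = ∑ x : Z, μ x * χ x := by
  rw [Gs_eq_sum]
  simp [Algebra.norm_self, Algebra.trace_self_apply]

lemma Gs_congr {Z R R' : Type*} [CommRing Z] [CommRing R] [Algebra Z R] [CommRing R']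
    [Algebra Z R'] (e : R ≃ₐ[Z] R') (μ : MulChar Z ℂ) (χ : AddChar Z ℂ) :
    Gs Z R μ χ = Gs Z R' μ χ := by
  unfold Gs
  refine finsum_eq_of_bijective e e.bijective fun x => ?_
  rw [Algebra.norm_eq_of_algEquiv e, Algebra.trace_eq_of_algEquiv e]

section
variable {F : Type*} [Field F]

lemma norm_prod_apply {A B : Type*} [CommRing A] [CommRing B] [Algebra F A] [Algebra F B]
    [Module.Finite F A] [Module.Finite F B] (x : A × B) :
    Algebra.norm F x = Algebra.norm F x.1 * Algebra.norm F x.2 := by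
  rw [Algebra.norm_apply, Algebra.norm_apply, Algebra.norm_apply, ← LinearMap.det_prodMap]
  congr 1

lemma Gs_prod {A B : Type*} [CommRing A] [CommRing B] [Algebra F A] [Algebra F B]
    [Module.Finite F A] [Module.Finite F B] [Finite A] [Finite B]
    (μ : MulChar F ℂ) (χ : AddChar F ℂ) :
    Gs F (A × B) μ χ = Gs F A μ χ * Gs F B μ χ := by
  have := Fintype.ofFinite A
  have := Fintype.ofFinite B
  rw [Gs_eq_sum, Gs_eq_sum, Gs_eq_sum, Fintype.sum_prod_type, Finset.sum_mul_sum]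
  refine Finset.sum_congr rfl fun a _ => Finset.sum_congr rfl fun b _ => ?_
  rw [norm_prod_apply, Algebra.trace_prod_apply, map_mul, AddChar.map_add_eq_mul]
  ring

/-- the Hasse-Davenport property -/
def Good (F R : Type*) [Field F] [CommRing R] [Algebra F R] : Prop :=
  ∃ k : ℕ, ∀ (μ : MulChar F ℂ) (χ : AddChar F ℂ), (∃ c, χ c ≠ 1) →
    Gs F R μ χ = (-1) ^ k * Gs F F μ χ ^ Module.finrank F R

lemma Good.congr {R R' : Type*} [CommRing R] [Algebra F R] [CommRing R']
    [Algebra F R'] (e : R ≃ₐ[F] R') (h : Good F R) : Good F R' := by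
  obtain ⟨k, hk⟩ := h
  refine ⟨k, fun μ χ hχ => ?_⟩
  rw [← Gs_congr e, hk μ χ hχ, e.toLinearEquiv.finrank_eq]

lemma Good.prod {A B : Type*} [CommRing A] [CommRing B] [Algebra F A] [Algebra F B]
    [Module.Finite F A] [Module.Finite F B] [Finite A] [Finite B]
    (h : Good F A) (h' : Good F B) : Good F (A × B) := by
  obtain ⟨k, hk⟩ := h
  obtain ⟨k', hk'⟩ := h'
  refine ⟨k + k', fun μ χ hχ => ?_⟩
  rw [Gs_prod, hk μ χ hχ, hk' μ χ hχ, Module.finrank_prod]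
  ring

lemma Good.field {E : Type*} [Finite F] [Field E] [Algebra F E] [Finite E] : Good F E := by
  have := Fintype.ofFinite F
  have := Fintype.ofFinite E
  refine ⟨Module.finrank F E - 1, fun μ χ hχ => ?_⟩
  rw [Gs_eq_sum, Gs_self]
  exact hasseDavenport μ χ hχ

lemma Good.subsingleton {R : Type*} [CommRing R] [Algebra F R] [Subsingleton R] : Good F R := by
  refine ⟨0, fun μ χ hχ => ?_⟩
  have := Fintype.ofFinite R
  have : Unique R := ⟨⟨0⟩, fun a => Subsingleton.elim _ _⟩
  rw [Gs_eq_sum, Module.finrank_zero_of_subsingleton, Fintype.sum_unique]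
  have h1 : (default : R) = 1 := Subsingleton.elim _ _
  have h2 : (1 : R) = 0 := Subsingleton.elim _ _
  rw [h1, map_one, map_one, h2, map_zero, AddChar.map_zero_eq_one]
  simp

lemma Good.pi [Finite F] {ι : Type*} [Finite ι] :
    ∀ (E : ι → Type*) [∀ i, Field (E i)] [∀ i, Algebra F (E i)] [∀ i, Finite (E i)],
      Good F (∀ i, E i) := by
  induction ι using Finite.induction_empty_option with
  | of_equiv e ih =>
    intro E _ _ _
    exact (ih (fun i => E (e i))).congr (AlgEquiv.piCongrLeft F E e)
  | h_empty =>
    intro E _ _ _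
    exact Good.subsingleton
  | h_option ih =>
    intro E _ _ _
    have h1 := ih (fun i => E (some i))
    have h2 : Good F (E none) := Good.field
    have h3 := h2.prod h1
    refine h3.congr (AlgEquiv.ofRingEquiv (f := RingEquiv.piOptionEquivProd.symm) ?_)
    intro r
    apply RingEquiv.piOptionEquivProd.injective
    rw [RingEquiv.apply_symm_apply]
    rfl

theorem Good.reduced [Finite F] {R : Type*} [CommRing R] [Algebra F R] [Finite R] [IsReduced R] :
    Good F R := by
  letI : ∀ I : MaximalSpectrum R, Field (R ⧸ I.asIdeal) := fun I =>
    Ideal.Quotient.field I.asIdeal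
  have : ∀ I : MaximalSpectrum R, Finite (R ⧸ I.asIdeal) := fun I =>
    Finite.of_surjective _ Ideal.Quotient.mk_surjective
  have h : Good F (∀ I : MaximalSpectrum R, R ⧸ I.asIdeal) := Good.pi _
  exact h.congr ((IsArtinianRing.equivPi R).restrictScalars F).symm

end
end HD
namespace QF

section det
open Polynomial Matrix
variable {Z : Type*} [CommRing Z] {ι : Type*} [Fintype ι] [DecidableEq ι]

lemma comp_det (M : Matrix ι ι Z) (r : Z[X]) :
    (det (1 + (X : Z[X]) • M.map C)).comp r = det (1 + r • M.map C) := by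
  rw [← coe_compRingHom_apply, RingHom.map_det]
  congr 1
  ext i j : 1
  by_cases h : i = j <;> simp [h] <;> ring

lemma eval_det' (M : Matrix ι ι Z) (r : Z) :
    (det (1 + (X : Z[X]) • M.map C)).eval r = det (1 + r • M) := by
  rw [← coe_evalRingHom, RingHom.map_det]
  congr 1
  ext i j : 1
  by_cases h : i = j <;> simp [h] <;> ring

lemma det_second (M : Matrix ι ι Z) (r : Z) : ∃ E w : Z,
    det (1 + r • M) = 1 + r * M.trace + r ^ 2 * E + r ^ 3 * w ∧
      2 * E = M.trace ^ 2 - (M * M).trace := by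
  set D := det (1 + (X : Z[X]) • M.map C) with hD
  obtain ⟨q0, hq0⟩ : ∃ q0 : Z[X], D = 1 + C M.trace * X + q0 * X ^ 2 := by
    have := det_one_add_X_smul M
    rw [smul_eq_C_mul] at this
    exact ⟨_, this⟩
  obtain ⟨q1, E, hq1⟩ : ∃ (q1 : Z[X]) (E : Z), q0 = X * q1 + C E :=
    ⟨_, _, (X_mul_divX_add q0).symm⟩
  have hDD : D = 1 + C M.trace * X + C E * X ^ 2 + X ^ 3 * q1 := by rw [hq0, hq1]; ring
  refine ⟨E, q1.eval r, ?_, ?_⟩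
  · rw [← eval_det', ← hD, hDD]
    simp
    ring
  · have h1 : D * D.comp (-X) = det (1 + (-X ^ 2 : Z[X]) • (M * M).map C) := by
      rw [hD, comp_det, ← det_mul]
      congr 1
      have hA : ∀ A : Matrix ι ι Z[X], (1 + A) * (1 + -A) = 1 + -(A * A) := by
        intro A
        noncomm_ring
      rw [neg_smul, hA, smul_mul_smul_comm, ← Matrix.map_mul, neg_smul, pow_two]
    have h2 := det_one_add_smul (-X ^ 2 : Z[X]) ((M * M).map C)
    rw [← h1] at h2
    have h3 : ((M * M).map C).trace = C (M * M).trace := by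
      simp only [Matrix.trace, Matrix.diag_apply, Matrix.map_apply, map_sum]
    rw [h3] at h2
    obtain ⟨u, h2⟩ : ∃ u : Z[X], D * D.comp (-X) =
        1 + C (M * M).trace * -X ^ 2 + u * (-X ^ 2) ^ 2 := ⟨_, h2⟩
    have h4 : D.comp (-X) = 1 - C M.trace * X + C E * X ^ 2 - X ^ 3 * q1.comp (-X) := by
      rw [hDD]
      simp
      ring
    rw [h4, hDD] at h2
    have h5 : C (2 * E - M.trace ^ 2 + (M * M).trace) * X ^ 2 =
        X ^ 3 * (u * X - (q1 * (1 - C M.trace * X + C E * X ^ 2 - X ^ 3 * q1.comp (-X))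
          - (1 + C M.trace * X + C E * X ^ 2) * q1.comp (-X)) - C E * C E * X) := by
      simp only [map_add, map_sub, map_mul, map_pow, map_ofNat]
      linear_combination h2
    have h6 := congrArg (fun f => coeff f 2) h5
    simp only [coeff_C_mul_X_pow, coeff_X_pow_mul'] at h6
    norm_num at h6
    linear_combination h6

end det

section
variable {Z R : Type*} [CommRing Z] [CommRing R] [Algebra Z R]
  {ι : Type*} [Fintype ι] [DecidableEq ι]

lemma norm_second (b : Module.Basis ι Z R) (r : Z) (x : R) : ∃ E w : Z,
    Algebra.norm Z (1 + r • x) = 1 + r * Algebra.trace Z R x + r ^ 2 * E + r ^ 3 * w ∧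
      2 * E = (Algebra.trace Z R x) ^ 2 - Algebra.trace Z R (x * x) := by
  have := det_second (Algebra.leftMulMatrix b x) r
  rwa [← map_mul, ← Algebra.trace_eq_matrix_trace b, ← Algebra.trace_eq_matrix_trace b,
    ← map_smul, ← map_one (Algebra.leftMulMatrix b), ← map_add, ← Algebra.norm_eq_matrix_det b]
    at this

/-- truncated exponential -/
def H (P h : Z) (m : ℕ) (R : Type*) [CommRing R] [Algebra Z R] (y : R) : R :=
  1 + P ^ m • y + (P ^ (2 * m) * h) • (y * y)

lemma H_add (P h : Z) (hh : 2 * h = 1) (m : ℕ) (hP : P ^ (3 * m) = 0) (y z : R) :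
    H P h m R (y + z) = H P h m R y * H P h m R z := by
  unfold H
  simp only [Algebra.smul_def, map_mul, map_pow]
  have h1 : (2 : R) * algebraMap Z R h = 1 := by
    have := congrArg (algebraMap Z R) hh
    rwa [map_mul, map_one, map_ofNat] at this
  have h2 : (algebraMap Z R P) ^ (3 * m) = 0 := by rw [← map_pow, hP, map_zero]
  set Q := algebraMap Z R P
  set k := algebraMap Z R h
  have h3 : Q ^ m * Q ^ m * Q ^ m = 0 := by rw [← h2]; ring
  have h4 : Q ^ (2 * m) = Q ^ m * Q ^ m := by ring
  rw [h4]
  linear_combination (Q ^ m * Q ^ m * y * z) * h1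
    - (k * y * z * z + k * y * y * z + Q ^ m * k * k * y * y * z * z) * h3

lemma norm_H (b : Module.Basis ι Z R) (P h : Z) (hh : 2 * h = 1) (m : ℕ) (hP : P ^ (3 * m) = 0)
    (y : R) : Algebra.norm Z (H P h m R y) = H P h m Z (Algebra.trace Z R y) := by
  have h0 : H P h m R y = 1 + P ^ m • (y + (P ^ m * h) • (y * y)) := by
    unfold H
    rw [smul_add, smul_smul, ← add_assoc]
    congr 2
    ring
  rw [h0]
  obtain ⟨E, w, h1, h2⟩ := norm_second b (P ^ m) (y + (P ^ m * h) • (y * y))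
  rw [h1]
  have h3 : (y + (P ^ m * h) • (y * y)) * (y + (P ^ m * h) • (y * y)) =
      y * y + (P ^ m) • (h • (y * (y * y)) + h • (y * y * y) +
        (P ^ m * h * h) • (y * y * (y * y))) := by
    simp only [Algebra.smul_def, map_mul, map_pow]
    ring
  rw [h3] at h2
  simp only [map_add, map_smul, smul_eq_mul] at h2 ⊢
  unfold H
  simp only [smul_eq_mul]
  generalize Algebra.trace Z R y = t at *
  generalize Algebra.trace Z R (y * y) = s at *
  generalize Algebra.trace Z R (y * (y * y)) = u1 at *
  generalize Algebra.trace Z R (y * y * y) = u2 at *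
  generalize Algebra.trace Z R (y * y * (y * y)) = u3 at *
  have h4 : P ^ m * P ^ m * P ^ m = 0 := by rw [← hP]; ring
  have h5 : P ^ (2 * m) = P ^ m * P ^ m := by ring
  rw [h5]
  generalize P ^ m = Q at *
  have h6 : E = h * (2 * E) := by linear_combination (-E) * hh
  rw [h2] at h6
  rw [h6]
  linear_combination (w + h * (2 * t * h * s + Q * h * h * s * s - h * u1 - h * u2
    - Q * h * h * u3)) * h4
end

lemma addChar_sum {Z : Type*} [AddCommGroup Z] (χ : AddChar Z ℂ) {ι : Type*} (s : Finset ι)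
    (f : ι → Z) : χ (∑ i ∈ s, f i) = ∏ i ∈ s, χ (f i) := by
  classical
  induction s using Finset.induction_on with
  | empty => simp
  | insert a s ha ih => rw [Finset.sum_insert ha, Finset.prod_insert ha,
      AddChar.map_add_eq_mul, ih]

section field
variable {F : Type*} [Field F] [Fintype F] [DecidableEq F]

lemma sum_sq (hF : ringChar F ≠ 2) (χ : AddChar F ℂ) (hχ : χ.IsPrimitive) (a : F) (ha : a ≠ 0) :
    ∑ t : F, χ (a * (t * t)) = ∑ s : F, (quadraticChar F s : ℂ) * χ (a * s) := by
  have h1 : ∑ t : F, χ (a * (t * t)) =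
      ∑ s : F, ∑ t ∈ Finset.univ.filter (fun t : F => t * t = s), χ (a * (t * t)) :=
    (Finset.sum_fiberwise _ _ _).symm
  have h2 : ∀ s : F, ∑ t ∈ Finset.univ.filter (fun t : F => t * t = s), χ (a * (t * t)) =
      (quadraticChar F s : ℂ) * χ (a * s) + χ (s * a) := by
    intro s
    rw [Finset.sum_congr rfl (g := fun _ => χ (a * s))
      (fun t ht => by rw [(Finset.mem_filter.mp ht).2]), Finset.sum_const, nsmul_eq_mul]
    have h3 := quadraticChar_card_sqrts hF s
    have h4 : ((Finset.univ.filter (fun t : F => t * t = s)).card : ℤ)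
        = quadraticChar F s + 1 := by
      rw [← h3]
      congr 2
      ext t
      simp [pow_two]
    have h5 : ((Finset.univ.filter (fun t : F => t * t = s)).card : ℂ)
        = quadraticChar F s + 1 := by exact_mod_cast congrArg (Int.cast : ℤ → ℂ) h4
    rw [h5, mul_comm s a]
    ring
  rw [h1, Finset.sum_congr rfl (fun s _ => h2 s), Finset.sum_add_distrib,
    AddChar.sum_mulShift a hχ, if_neg ha]
  simp

lemma sum_sq_mul (hF : ringChar F ≠ 2) (χ : AddChar F ℂ) (hχ : χ.IsPrimitive) (a w : F)
    (ha : a ≠ 0) (hw : w ≠ 0) :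
    ∑ t : F, χ (a * (w * (t * t))) = (quadraticChar F w : ℂ) * ∑ t : F, χ (a * (t * t)) := by
  have h1 := sum_sq hF χ hχ (a * w) (mul_ne_zero ha hw)
  simp only [← mul_assoc] at h1 ⊢
  rw [h1]
  have h2 := sum_sq hF χ hχ a ha
  simp only [← mul_assoc] at h2
  rw [h2, Finset.mul_sum]
  refine Fintype.sum_equiv (Equiv.mulLeft₀ w hw) _ _ fun s => ?_
  simp only [Equiv.mulLeft₀_apply, map_mul, Int.cast_mul]
  have : (quadraticChar F w : ℂ) * (quadraticChar F w : ℂ) = 1 := by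
    have := quadraticChar_sq_one hw
    rw [pow_two] at this
    exact_mod_cast congrArg (Int.cast : ℤ → ℂ) this
  rw [← mul_assoc a w s]
  linear_combination (-(quadraticChar F s : ℂ) * χ (a * w * s)) * this

lemma quad_sum (hF : ringChar F ≠ 2) (χ : AddChar F ℂ) (hχ : χ.IsPrimitive)
    {ι : Type*} [Fintype ι] [DecidableEq ι] (B : Matrix ι ι F) (hB : B.IsSymm) (hdet : B.det ≠ 0) :
    ∃ D : ℂ, D ≠ 0 ∧ ∀ a : F, a ≠ 0 →
      ∑ v : ι → F, χ (a * (∑ i, ∑ j, v i * B i j * v j)) =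
        D * (∑ t : F, χ (a * (t * t))) ^ Fintype.card ι := by
  have h2 : (2 : F) ≠ 0 := Ring.two_ne_zero hF
  let _ : Invertible (2 : F) := invertibleOfNonzero h2
  set Q : QuadraticForm F (ι → F) := LinearMap.BilinMap.toQuadraticMap (Matrix.toLinearMap₂' F B) with hQ
  have hQv : ∀ v, Q v = ∑ i, ∑ j, v i * B i j * v j := by
    intro v
    rw [hQ, LinearMap.BilinMap.toQuadraticMap_apply,
      Matrix.toLinearMap₂'_apply]
    refine Finset.sum_congr rfl fun i _ => Finset.sum_congr rfl fun j _ => ?_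
    simp
    ring
  have hnd : LinearMap.SeparatingLeft (QuadraticMap.associated (R := F) Q) := by
    have : QuadraticMap.associated (R := F) Q = Matrix.toLinearMap₂' F B := by
      rw [hQ]
      apply QuadraticMap.associated_left_inverse
      intro x y
      rw [Matrix.toLinearMap₂'_apply', Matrix.toLinearMap₂'_apply', Matrix.dotProduct_mulVec,
        ← Matrix.mulVec_transpose, hB.eq, dotProduct_comm]
    rw [this]
    exact LinearMap.separatingLeft_toLinearMap₂'_of_det_ne_zero' hdet
  obtain ⟨w, ⟨e⟩⟩ := QuadraticForm.equivalent_weightedSumSquares_units_of_nondegenerate' Q hnd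
  refine ⟨∏ i, (quadraticChar F (w i : F) : ℂ), ?_, ?_⟩
  · rw [Finset.prod_ne_zero_iff]
    intro i _ h
    rw [Int.cast_eq_zero, quadraticChar_eq_zero_iff] at h
    exact (w i).ne_zero h
  · intro a ha
    have h1 : ∑ v : ι → F, χ (a * (∑ i, ∑ j, v i * B i j * v j)) =
        ∑ u : Fin (Module.finrank F (ι → F)) → F, ∏ i, χ (a * ((w i : F) * (u i * u i))) := by
      refine Fintype.sum_equiv e.toEquiv _ _ fun v => ?_
      rw [← hQv, ← e.map_app v, QuadraticMap.weightedSumSquares_apply, Finset.mul_sum,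
        addChar_sum]
      rfl
    rw [h1, ← Fintype.prod_sum (f := fun i t => χ (a * ((w i : F) * (t * t)))),
      Finset.prod_congr rfl
      (fun i _ => sum_sq_mul hF χ hχ a (w i) ha (w i).ne_zero), Finset.prod_mul_distrib,
      Finset.prod_const, Finset.card_univ, Fintype.card_fin]
    congr 2
    exact Module.finrank_fintype_fun_eq_card F

end field
end QF

namespace LOC
open HD QF

section
variable {Z R : Type*} [CommRing Z] [CommRing R] [Algebra Z R]
  {ι : Type*} [Fintype ι] [DecidableEq ι]

lemma H_zero (P h : Z) (m : ℕ) : H P h m R 0 = 1 := by simp [H]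

lemma H_eq_one_iff (P h : Z) (m : ℕ) (hm : P ^ (3 * m) = 0) (u : R) :
    H P h m R u = 1 ↔ P ^ m • u = 0 := by
  have e1 : H P h m R u = 1 + (P ^ m • u) * (1 + (P ^ m) • (h • u)) := by
    unfold H
    simp only [Algebra.smul_def, map_mul, map_pow]
    ring
  have hu : IsUnit (1 + (P ^ m) • (h • u)) := by
    apply IsNilpotent.isUnit_one_add
    refine ⟨3, ?_⟩
    rw [smul_pow, ← pow_mul, mul_comm m 3, hm, zero_smul]
  rw [e1, add_eq_left]
  constructor
  · intro h
    exact (hu.mul_left_eq_zero).mp h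
  · intro h
    rw [h, zero_mul]

lemma psi_one_add (P h : Z) (m ε : ℕ) (hP2 : P ^ (2 * m + ε) = 0) (c : Z)
    (ψ : MulChar Z ℂ) (χ : AddChar Z ℂ) (hψ : ∀ t, ψ (H P h m Z t) = χ (P ^ m * c * t)) (t : Z) :
    ψ (1 + P ^ (m + ε) * t) = χ (P ^ (m + ε) * c * t) := by
  have := hψ (P ^ ε * t)
  have h1 : H P h m Z (P ^ ε * t) = 1 + P ^ (m + ε) * t := by
    unfold H
    simp only [smul_eq_mul]
    linear_combination (h * P ^ ε * t * t) * hP2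
  rw [h1] at this
  rw [this]
  congr 1
  ring

lemma step3 [Fintype R] (b : Module.Basis ι Z R) (P h : Z) (m ε : ℕ)
    (hP2 : P ^ (2 * m + ε) = 0) (c : Z)
    (ψ : MulChar Z ℂ) (χ : AddChar Z ℂ) (hψ : ∀ t, ψ (H P h m Z t) = χ (P ^ m * c * t))
    (hχ : ∀ x : R, x ≠ 0 → ∃ y, χ (Algebra.trace Z R (x * y)) ≠ 1) [DecidableEq R] :
    Gs Z R ψ χ = ∑ α ∈ Finset.univ.filter (fun α : R => P ^ (m + ε) • (algebraMap Z R c + α) = 0),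
      ψ (Algebra.norm Z α) * χ (Algebra.trace Z R α) := by
  rw [Gs_eq_sum]
  set f : R → ℂ := fun α => ψ (Algebra.norm Z α) * χ (Algebra.trace Z R α) with hf
  set k := m + ε with hk
  have hP2k : P ^ k * P ^ k = 0 := by
    have : P ^ k * P ^ k = P ^ (2 * m + ε) * P ^ ε := by rw [hk]; ring
    rw [this, hP2, zero_mul]
  have hshift : ∀ y α : R, f (α * (1 + P ^ k • y)) =
      f α * χ (Algebra.trace Z R ((P ^ k • (algebraMap Z R c + α)) * y)) := by
    intro y α
    obtain ⟨E, w, h1, -⟩ := norm_second b (P ^ k) y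
    have h2 : Algebra.norm Z (1 + P ^ k • y) = 1 + P ^ k * Algebra.trace Z R y := by
      rw [h1]; linear_combination (E + P ^ k * w) * hP2k
    simp only [hf]
    rw [map_mul (Algebra.norm Z), h2, map_mul ψ, psi_one_add P h m ε hP2 c ψ χ hψ]
    have h3 : α * (1 + P ^ k • y) = α + P ^ k • (α * y) := by
      rw [mul_add, mul_one, mul_smul_comm]
    have h4 : (P ^ k • (algebraMap Z R c + α)) * y = P ^ k • (c • y) + P ^ k • (α * y) := by
      simp only [Algebra.smul_def]; ring
    rw [h3, h4]
    simp only [map_add, map_smul, smul_eq_mul, AddChar.map_add_eq_mul]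
    rw [← mul_assoc (P ^ k)]
    ring
  have hinv : ∀ y : R, ∑ α, f (α * (1 + P ^ k • y)) = ∑ α, f α := by
    intro y
    have hu : IsUnit (1 + P ^ k • y) := by
      apply IsNilpotent.isUnit_one_add
      refine ⟨2, ?_⟩
      rw [smul_pow, pow_two, hP2k, zero_smul]
    obtain ⟨u, hu⟩ := hu
    rw [← hu]
    exact Fintype.sum_equiv (Units.mulRight u) _ _ (fun α => rfl)
  have hin : ∀ x : R, ∑ y : R, χ (Algebra.trace Z R (x * y)) =
      if x = 0 then (Fintype.card R : ℂ) else 0 := by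
    intro x
    split_ifs with hx
    · simp [hx]
    · let θ : AddChar R ℂ := χ.compAddMonoidHom
        ((Algebra.trace Z R).toAddMonoidHom.comp (AddMonoidHom.mulLeft x))
      have : ∑ y, θ y = 0 := by
        apply AddChar.sum_eq_zero_of_ne_one
        obtain ⟨y, hy⟩ := hχ x hx
        intro h
        apply hy
        have := congrArg (fun g : AddChar R ℂ => g y) h
        simpa [θ] using this
      simpa [θ] using this
  have hcard : (Fintype.card R : ℂ) ≠ 0 := by
    exact_mod_cast Fintype.card_ne_zero
  apply mul_left_cancel₀ hcard
  calc (Fintype.card R : ℂ) * ∑ α, f α = ∑ y : R, ∑ α, f (α * (1 + P ^ k • y)) := by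
        rw [Finset.sum_congr rfl (fun y _ => hinv y)]
        simp
    _ = ∑ α, f α * ∑ y : R, χ (Algebra.trace Z R ((P ^ k • (algebraMap Z R c + α)) * y)) := by
        rw [Finset.sum_comm]
        simp only [hshift, Finset.mul_sum]
    _ = _ := by
        simp only [hin, Finset.sum_filter, Finset.mul_sum]
        refine Finset.sum_congr rfl fun α _ => ?_
        split_ifs <;> simp [hf, mul_comm]

lemma f_eval (b : Module.Basis ι Z R) (P h : Z) (hh : 2 * h = 1) (m : ℕ)
    (hP3 : P ^ (3 * m) = 0) (c : Z)
    (ψ : MulChar Z ℂ) (χ : AddChar Z ℂ) (hψ : ∀ t, ψ (H P h m Z t) = χ (P ^ m * c * t)) (z : R) :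
    ψ (Algebra.norm Z (-c • H P h m R z)) * χ (Algebra.trace Z R (-c • H P h m R z)) =
      (ψ (-c) * χ (-c)) ^ Fintype.card ι *
        χ (-c * h * (P ^ (2 * m) * Algebra.trace Z R (z * z))) := by
  have h1 : Algebra.norm Z (-c • H P h m R z) =
      (-c) ^ Fintype.card ι * H P h m Z (Algebra.trace Z R z) := by
    rw [Algebra.smul_def, map_mul, norm_H b P h hh m hP3, Algebra.norm_algebraMap_of_basis b]
  have h2 : Algebra.trace Z R (-c • H P h m R z) = Fintype.card ι • (-c) +
      -(P ^ m * c * Algebra.trace Z R z) + -c * h * (P ^ (2 * m) * Algebra.trace Z R (z * z)) := by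
    have h3 : Algebra.trace Z R (1 : R) = Fintype.card ι := by
      have := Algebra.trace_algebraMap_of_basis b (1 : Z)
      simpa using this
    unfold H
    simp only [map_add, map_smul, smul_eq_mul, h3, nsmul_eq_mul]
    ring
  rw [h1, h2, map_mul, map_pow, hψ, AddChar.map_add_eq_mul, AddChar.map_add_eq_mul,
    AddChar.map_nsmul_eq_pow, mul_pow]
  have h5 := χ.map_add_eq_mul (P ^ m * c * Algebra.trace Z R z) (-(P ^ m * c * Algebra.trace Z R z))
  rw [add_neg_cancel, AddChar.map_zero_eq_one] at h5
  linear_combination (-(ψ (-c) ^ Fintype.card ι * χ (-c) ^ Fintype.card ι *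
    χ (-c * h * (P ^ (2 * m) * Algebra.trace Z R (z * z))))) * h5

lemma local_sum [Fintype R] [DecidableEq R] (b : Module.Basis ι Z R) (P h : Z) (hh : 2 * h = 1)
    (m ε : ℕ) (hm : 0 < m) (hεm : ε ≤ m)
    (hP2 : P ^ (2 * m + ε) = 0) (c : Z) (hc : IsUnit c)
    (ψ : MulChar Z ℂ) (χ : AddChar Z ℂ) (hψ : ∀ t, ψ (H P h m Z t) = χ (P ^ m * c * t))
    (hχ : ∀ x : R, x ≠ 0 → ∃ y, χ (Algebra.trace Z R (x * y)) ≠ 1)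
    (hann : ∀ x : R, P ^ (m + ε) • x = 0 → ∃ w, x = P ^ m • w) :
    ((Finset.univ.filter (fun z : R => P ^ m • z = 0)).card : ℂ) * Gs Z R ψ χ =
      (ψ (-c) * χ (-c)) ^ Fintype.card ι *
        ∑ z : R, χ (-c * h * (P ^ (2 * m) * Algebra.trace Z R (z * z))) := by
  have hP3 : P ^ (3 * m) = 0 := by
    obtain ⟨j, rfl⟩ := Nat.exists_eq_add_of_le hεm
    have : 3 * (ε + j) = 2 * (ε + j) + ε + j := by ring
    rw [this, pow_add, hP2, zero_mul]
  rw [step3 b P h m ε hP2 c ψ χ hψ hχ, Finset.mul_sum, Finset.mul_sum,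
    Finset.sum_congr rfl (fun z _ => (f_eval b P h hh m hP3 c ψ χ hψ z).symm)]
  obtain ⟨c', hc'⟩ := hc.exists_left_inv
  have hcR : algebraMap Z R c' * algebraMap Z R c = 1 := by rw [← map_mul, hc', map_one]
  have hPR2 : (algebraMap Z R P) ^ (2 * m + ε) = 0 := by rw [← map_pow, hP2, map_zero]
  have hPR3 : (algebraMap Z R P) ^ (3 * m) = 0 := by rw [← map_pow, hP3, map_zero]
  have hmaps : ∀ z ∈ (Finset.univ : Finset R), -c • H P h m R z ∈
      Finset.univ.filter (fun α : R => P ^ (m + ε) • (algebraMap Z R c + α) = 0) := by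
    intro z _
    rw [Finset.mem_filter]
    refine ⟨Finset.mem_univ _, ?_⟩
    unfold H
    simp only [Algebra.smul_def, map_mul, map_pow, map_neg]
    linear_combination (-(algebraMap Z R c) * (z + algebraMap Z R P ^ m * algebraMap Z R h * z * z))
      * hPR2
  rw [← Finset.sum_fiberwise_of_maps_to hmaps]
  refine Finset.sum_congr rfl fun α hα => ?_
  rw [Finset.sum_congr rfl (g := fun _ => ψ (Algebra.norm Z α) * χ (Algebra.trace Z R α))
    (fun z hz => by rw [(Finset.mem_filter.mp hz).2]), Finset.sum_const, nsmul_eq_mul]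
  congr 2
  obtain ⟨w, hw⟩ := hann _ (Finset.mem_filter.mp hα).2
  obtain ⟨z0, hz0⟩ : ∃ z0 : R, -c • H P h m R z0 = α := by
    set w' := -(c' • w) with hw'
    refine ⟨w' - (P ^ m * h) • (w' * w'), ?_⟩
    have e1 : H P h m R (w' - (P ^ m * h) • (w' * w')) = 1 + P ^ m • w' := by
      unfold H
      simp only [Algebra.smul_def, map_mul, map_pow]
      set p := algebraMap Z R P
      set k := algebraMap Z R h
      linear_combination (- 2 * k * k * w' * w' * w' +
        k * k * k * p ^ m * w' * w' * w' * w') * hPR3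
    rw [e1, hw']
    have e2 : α = P ^ m • w - algebraMap Z R c := by rw [← hw]; ring
    rw [e2]
    simp only [Algebra.smul_def, map_mul, map_pow, map_neg]
    linear_combination (algebraMap Z R P ^ m * w) * hcR
  symm
  refine Finset.card_bij' (fun z _ => z - z0) (fun u _ => u + z0) ?_ ?_ ?_ ?_
  · intro z hz
    have hz := (Finset.mem_filter.mp hz).2
    rw [Finset.mem_filter]
    refine ⟨Finset.mem_univ _, ?_⟩
    rw [← H_eq_one_iff P h m hP3]
    have e1 : H P h m R z = H P h m R z0 := by
      have : -c • H P h m R z = -c • H P h m R z0 := by rw [hz, hz0]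
      have := congrArg (fun x => (-c') • x) this
      simpa only [smul_smul, neg_mul_neg, hc', one_smul] using this
    have e2 : H P h m R z0 * H P h m R (-z0) = 1 := by
      rw [← H_add P h hh m hP3, add_neg_cancel, H_zero]
    rw [sub_eq_add_neg, H_add P h hh m hP3, e1, e2]
  · intro u hu
    have hu := (Finset.mem_filter.mp hu).2
    rw [Finset.mem_filter]
    refine ⟨Finset.mem_univ _, ?_⟩
    rw [← H_eq_one_iff P h m hP3] at hu
    rw [H_add P h hh m hP3, hu, one_mul, hz0]
  · intro z _; simp
  · intro z _; simp
end
end LOC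

namespace LOC
open HD QF

lemma addChar_repr {N : ℕ} [NeZero N] (θ : AddChar (ZMod N) ℂ) :
    ∃ a : ZMod N, ∀ t, θ t = ZMod.stdAddChar (a * t) := by
  have h1 : IsPrimitiveRoot (ZMod.stdAddChar (N := N) 1) N := by
    have := Complex.isPrimitiveRoot_exp N (NeZero.ne N)
    have h2 := ZMod.stdAddChar_coe (N := N) 1
    simp only [Int.cast_one, mul_one] at h2
    rw [h2]
    exact this
  have h2 : (θ 1) ^ N = 1 := by
    rw [← AddChar.map_nsmul_eq_pow]
    simp
  obtain ⟨i, -, hi⟩ := h1.eq_pow_of_pow_eq_one h2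
  refine ⟨i, fun t => ?_⟩
  obtain ⟨s, rfl⟩ : ∃ s : ℕ, (s : ZMod N) = t := ⟨t.val, ZMod.natCast_zmod_val t⟩
  have e1 : (s : ZMod N) = s • 1 := by simp
  have e2 : (i : ZMod N) * s = (i * s) • 1 := by simp
  rw [e2, AddChar.map_nsmul_eq_pow, pow_mul, hi, e1, AddChar.map_nsmul_eq_pow]

lemma std_eq_zero {N : ℕ} [NeZero N] (a : ZMod N) (h : ∀ s, ZMod.stdAddChar (a * s) = 1) :
    a = 0 := by
  by_contra ha
  apply ZMod.isPrimitive_stdAddChar N ha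
  ext s
  simpa using h s

lemma P_pow_zero (p n : ℕ) {j : ℕ} (hj : n ≤ j) : (p : ZMod (p ^ n)) ^ j = 0 := by
  rw [← Nat.cast_pow, ZMod.natCast_eq_zero_iff]
  exact pow_dvd_pow p hj

section
variable (p : ℕ) [hp : Fact p.Prime] (n : ℕ)

lemma ann_Z {j k : ℕ} (hjk : j + k = n) (x : ZMod (p ^ n)) (hx : (p : ZMod (p ^ n)) ^ j * x = 0) :
    ∃ w, x = (p : ZMod (p ^ n)) ^ k * w := by
  obtain ⟨s, rfl⟩ : ∃ s : ℕ, (s : ZMod (p ^ n)) = x := ⟨x.val, ZMod.natCast_zmod_val x⟩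
  rw [← Nat.cast_pow, ← Nat.cast_mul, ZMod.natCast_eq_zero_iff, ← hjk, pow_add] at hx
  obtain ⟨w, hw⟩ := (Nat.mul_dvd_mul_iff_left (pow_pos hp.out.pos j)).mp hx
  exact ⟨w, by rw [hw]; push_cast; ring⟩

lemma isUnit_or (c : ZMod (p ^ n)) : IsUnit c ∨ ∃ w, c = (p : ZMod (p ^ n)) * w := by
  obtain ⟨s, rfl⟩ : ∃ s : ℕ, (s : ZMod (p ^ n)) = c := ⟨c.val, ZMod.natCast_zmod_val c⟩
  by_cases h : p ∣ s
  · obtain ⟨w, rfl⟩ := h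
    exact Or.inr ⟨w, by push_cast; ring⟩
  · left
    rw [ZMod.isUnit_iff_coprime]
    exact Nat.Coprime.pow_right _ ((Nat.Prime.coprime_iff_not_dvd hp.out).mpr h).symm

lemma not_trivial (hn : 1 ≤ n) (ψ : DirichletCharacter ℂ (p ^ n)) (hψ : ψ.IsPrimitive) :
    ∃ s : ZMod (p ^ n), ψ (1 + (p : ZMod (p ^ n)) ^ (n - 1) * s) ≠ 1 := by
  by_contra hcon
  push Not at hcon
  have hdvd : p ^ (n - 1) ∣ p ^ n := pow_dvd_pow p (by omega)
  have h1 : ψ.FactorsThrough (p ^ (n - 1)) := by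
    rw [DirichletCharacter.factorsThrough_iff_ker_unitsMap hdvd]
    intro u hu
    rw [MonoidHom.mem_ker] at hu ⊢
    have hu2 : (ZMod.castHom hdvd (ZMod (p ^ (n - 1)))) (u : ZMod (p ^ n)) = 1 := by
      have := congrArg Units.val hu
      simpa [ZMod.unitsMap] using this
    obtain ⟨s, hs⟩ : ∃ s : ℤ, (s : ZMod (p ^ n)) = u := ⟨_, ZMod.intCast_zmod_cast _⟩
    rw [← hs, map_intCast] at hu2
    have hu3 : ((s - 1 : ℤ) : ZMod (p ^ (n - 1))) = 0 := by push_cast; rw [hu2, sub_self]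
    rw [ZMod.intCast_zmod_eq_zero_iff_dvd] at hu3
    obtain ⟨w, hw⟩ := hu3
    have h2 : (u : ZMod (p ^ n)) = 1 + (p : ZMod (p ^ n)) ^ (n - 1) * w := by
      rw [← hs, show s = 1 + (p ^ (n - 1) : ℕ) * w by rw [← hw]; ring]
      push_cast
      ring
    ext
    rw [MulChar.coe_toUnitHom, h2, hcon]
    rfl
  have h2 := DirichletCharacter.conductor_dvd_of_mem_conductorSet ψ
    ((DirichletCharacter.mem_conductorSet_iff ψ).mpr h1)
  rw [(DirichletCharacter.isPrimitive_def ψ).mp hψ] at h2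
  have := (Nat.pow_dvd_pow_iff_le_right hp.out.one_lt).mp h2
  omega

lemma exists_c (m ε : ℕ) (hm : 1 ≤ m) (hε : ε ≤ 1) (hn : n = 2 * m + ε) (h : ZMod (p ^ n))
    (hh : 2 * h = 1) (ψ : DirichletCharacter ℂ (p ^ n)) (hψ : ψ.IsPrimitive) :
    ∃ c : ZMod (p ^ n), IsUnit c ∧ ∀ t, ψ (H (p : ZMod (p ^ n)) h m _ t) =
      ZMod.stdAddChar ((p : ZMod (p ^ n)) ^ m * c * t) := by
  set P : ZMod (p ^ n) := (p : ZMod (p ^ n)) with hP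
  have hP3 : P ^ (3 * m) = 0 := P_pow_zero p n (by omega)
  let θ : AddChar (ZMod (p ^ n)) ℂ :=
    { toFun := fun t => ψ (H P h m _ t)
      map_zero_eq_one' := by simp [H]
      map_add_eq_mul' := fun x y => by rw [H_add P h hh m hP3, map_mul] }
  obtain ⟨a, ha⟩ := addChar_repr θ
  have ha : ∀ t, ψ (H P h m _ t) = ZMod.stdAddChar (a * t) := ha
  have h1 : P ^ (m + ε) * a = 0 := by
    rw [mul_comm]
    apply std_eq_zero
    intro s
    rw [mul_assoc, ← ha]
    have : H P h m (ZMod (p ^ n)) (P ^ (m + ε) * s) = 1 := by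
      unfold H
      have h0 : P ^ (2 * m + ε) = 0 := P_pow_zero p n (by omega)
      simp only [smul_eq_mul]
      linear_combination (s + P ^ (2 * m + ε) * h * s * s) * h0
    rw [this, map_one]
  obtain ⟨c, hc⟩ := ann_Z p n (j := m + ε) (k := m) (by omega) a h1
  rw [← hP] at hc
  refine ⟨c, ?_, fun t => by rw [ha, hc]⟩
  rcases isUnit_or p n c with hu | ⟨w, hw⟩
  · exact hu
  · exfalso
    obtain ⟨s, hs⟩ := not_trivial p n (by omega) ψ hψ
    apply hs
    have e1 : 1 + P ^ (n - 1) * s = H P h m (ZMod (p ^ n)) (P ^ (m + ε - 1) * s) := by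
      unfold H
      have h0 : P ^ (2 * m + (m + ε - 1) + (m + ε - 1)) = 0 := P_pow_zero p n (by omega)
      have h0' : n - 1 = m + (m + ε - 1) := by omega
      rw [h0']
      simp only [smul_eq_mul]
      linear_combination (-h * s * s) * h0
    rw [e1, ha, hc, hw]
    have e2 : P ^ m * (P * w) * (P ^ (m + ε - 1) * s) = 0 := by
      have h0 : P ^ (m + 1 + (m + ε - 1)) = 0 := P_pow_zero p n (by omega)
      linear_combination (w * s) * h0
    rw [← hP, e2, AddChar.map_zero_eq_one]

end
end LOC

namespace LOC
open HD QF

lemma sum_comp_surj {A B : Type*} [AddCommGroup A] [AddCommGroup B] [Fintype A] [Fintype B]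
    (f : A →+ B) (hf : Function.Surjective f) :
    ∃ κ : ℂ, κ ≠ 0 ∧ ∀ g : B → ℂ, ∑ x, g (f x) = κ * ∑ y, g y := by
  classical
  refine ⟨((Finset.univ.filter (fun x => f x = 0)).card : ℂ), ?_, fun g => ?_⟩
  · rw [Nat.cast_ne_zero]
    exact (Finset.card_pos.mpr ⟨0, by simp⟩).ne'
  · rw [← Finset.sum_fiberwise Finset.univ f, Finset.mul_sum]
    refine Finset.sum_congr rfl fun y _ => ?_
    rw [Finset.sum_congr rfl (g := fun _ => g y)
      (fun z hz => by rw [(Finset.mem_filter.mp hz).2]), Finset.sum_const, nsmul_eq_mul]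
    congr 2
    obtain ⟨x0, hx0⟩ := hf y
    refine Finset.card_bij' (fun z _ => z - x0) (fun u _ => u + x0) ?_ ?_ ?_ ?_
    · intro z hz
      simpa [hx0, sub_eq_zero] using hz
    · intro z hz
      simp only [Finset.mem_filter, Finset.mem_univ, true_and] at hz
      simp [hx0, hz]
    · intro z _; simp
    · intro z _; simp

section
variable {Z R : Type*} [CommRing Z] [CommRing R] [Algebra Z R]
  {ι : Type*} [Fintype ι] [DecidableEq ι]

lemma trace_sq (b : Module.Basis ι Z R) (v : ι → Z) :
    Algebra.trace Z R ((b.equivFun.symm v) * (b.equivFun.symm v)) =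
      ∑ i, ∑ j, v i * Algebra.traceMatrix Z b i j * v j := by
  rw [Module.Basis.equivFun_symm_apply, Finset.sum_mul_sum, map_sum]
  refine Finset.sum_congr rfl fun i _ => ?_
  rw [map_sum]
  refine Finset.sum_congr rfl fun j _ => ?_
  rw [smul_mul_smul_comm, map_smul, Algebra.traceMatrix_apply, Algebra.traceForm_apply,
    smul_eq_mul]
  ring

lemma trace_nondeg (b : Module.Basis ι Z R) (hdet : IsUnit (Algebra.traceMatrix Z b).det) (x : R)
    (hx : ∀ y, Algebra.trace Z R (x * y) = 0) : x = 0 := by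
  have h1 : (Algebra.traceMatrix Z b).mulVec (b.equivFun x) = 0 := by
    ext i
    have := hx (b i)
    rw [← b.equivFun.symm_apply_apply x, Module.Basis.equivFun_symm_apply, Finset.sum_mul,
      map_sum] at this
    simp only [Matrix.mulVec, dotProduct, Pi.zero_apply]
    rw [← this]
    refine Finset.sum_congr rfl fun j _ => ?_
    rw [smul_mul_assoc, map_smul, Algebra.traceMatrix_apply, Algebra.traceForm_apply, smul_eq_mul,
      mul_comm (b i)]
    ring
  have h2 : b.equivFun x = 0 := by
    have h3 : IsUnit (Algebra.traceMatrix Z b) := (Matrix.isUnit_iff_isUnit_det _).mpr hdet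
    exact Matrix.mulVec_injective_of_isUnit h3 (by rw [h1, Matrix.mulVec_zero])
  exact b.equivFun.map_eq_zero_iff.mp h2
end

section
variable (p : ℕ) [hp : Fact p.Prime] (n : ℕ)

lemma quad_local (hodd : Odd p) (m ε : ℕ) (hm : 1 ≤ m) (hε : ε ≤ 1) (hn : n = 2 * m + ε)
    {R : Type*} [CommRing R] [Algebra (ZMod (p ^ n)) R] [Fintype R]
    {ι : Type*} [Fintype ι] [DecidableEq ι] (b : Module.Basis ι (ZMod (p ^ n)) R)
    (hdet : IsUnit (Algebra.traceMatrix (ZMod (p ^ n)) b).det) :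
    ∃ D : ℂ, D ≠ 0 ∧ ∀ a : ZMod (p ^ n), IsUnit a →
      ∑ z : R, ZMod.stdAddChar (a * ((p : ZMod (p ^ n)) ^ (2 * m) *
          Algebra.trace (ZMod (p ^ n)) R (z * z))) =
        D * (∑ t : ZMod (p ^ n), ZMod.stdAddChar (a * ((p : ZMod (p ^ n)) ^ (2 * m) * (t * t))))
          ^ Fintype.card ι := by
  classical
  obtain rfl | rfl : ε = 0 ∨ ε = 1 := by omega
  · refine ⟨1, one_ne_zero, fun a _ => ?_⟩
    rw [P_pow_zero p n (by omega)]
    simp only [zero_mul, mul_zero, AddChar.map_zero_eq_one, Finset.sum_const, Finset.card_univ,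
      nsmul_eq_mul, mul_one, one_mul]
    rw [Fintype.card_congr b.equivFun.toEquiv, Fintype.card_fun]
    push_cast
    rfl
  · have hdvd : p ∣ p ^ n := dvd_pow_self p (by omega)
    set π := ZMod.castHom hdvd (ZMod p) with hπ
    have hπs : Function.Surjective π := ZMod.castHom_surjective hdvd
    have hker : ∀ x y : ZMod (p ^ n), π x = π y → (p : ZMod (p ^ n)) ^ (2 * m) * x =
        (p : ZMod (p ^ n)) ^ (2 * m) * y := by
      intro x y hxy
      obtain ⟨s, rfl⟩ : ∃ s : ℤ, (s : ZMod (p ^ n)) = x := ⟨_, ZMod.intCast_zmod_cast _⟩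
      obtain ⟨t, rfl⟩ : ∃ s : ℤ, (s : ZMod (p ^ n)) = y := ⟨_, ZMod.intCast_zmod_cast _⟩
      rw [map_intCast, map_intCast, ← sub_eq_zero, ← Int.cast_sub,
        ZMod.intCast_zmod_eq_zero_iff_dvd] at hxy
      obtain ⟨w, hw⟩ := hxy
      rw [← sub_eq_zero, ← mul_sub, ← Int.cast_sub, hw]
      push_cast
      rw [← mul_assoc, ← pow_succ, P_pow_zero p n (by omega), zero_mul]
    choose σ hσ using hπs
    let χ' : AddChar (ZMod p) ℂ :=
      { toFun := fun u => ZMod.stdAddChar ((p : ZMod (p ^ n)) ^ (2 * m) * σ u)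
        map_zero_eq_one' := by
          rw [hker (σ 0) 0 (by rw [hσ, map_zero]), mul_zero, AddChar.map_zero_eq_one]
        map_add_eq_mul' := fun x y => by
          rw [hker (σ (x + y)) (σ x + σ y) (by rw [hσ, map_add, hσ, hσ]), mul_add,
            AddChar.map_add_eq_mul] }
    have hχ' : ∀ x, χ' (π x) = ZMod.stdAddChar ((p : ZMod (p ^ n)) ^ (2 * m) * x) := by
      intro x
      change ZMod.stdAddChar ((p : ZMod (p ^ n)) ^ (2 * m) * σ (π x)) = _
      rw [hker (σ (π x)) x (hσ _)]
    have hprim : χ'.IsPrimitive := by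
      apply AddChar.IsPrimitive.of_ne_one
      intro h1
      have h2 : (p : ZMod (p ^ n)) ^ (2 * m) = 0 := by
        apply std_eq_zero
        intro s
        rw [← hχ', h1, AddChar.one_apply]
      rw [← Nat.cast_pow, ZMod.natCast_eq_zero_iff, Nat.pow_dvd_pow_iff_le_right hp.out.one_lt] at h2
      omega
    have hF : ringChar (ZMod p) ≠ 2 := by
      rw [ZMod.ringChar_zmod_n]
      rintro rfl
      exact absurd hodd (by decide)
    set B := (Algebra.traceMatrix (ZMod (p ^ n)) b).map π with hB
    have hBs : B.IsSymm := by
      ext i j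
      simp only [hB, Matrix.transpose_apply, Matrix.map_apply, Algebra.traceMatrix_apply,
        Algebra.traceForm_apply]
      rw [mul_comm]
    have hBd : B.det ≠ 0 := by
      have : B.det = π (Algebra.traceMatrix (ZMod (p ^ n)) b).det := by
        rw [RingHom.map_det]; rfl
      rw [this]
      exact (hdet.map π).ne_zero
    obtain ⟨D, hD, hDa⟩ := quad_sum hF χ' hprim B hBs hBd
    obtain ⟨κ₁, hκ₁, h1⟩ := sum_comp_surj (π : ZMod (p ^ n) →+ ZMod p)
      (ZMod.castHom_surjective hdvd)
    obtain ⟨κ₂, hκ₂, h2⟩ := sum_comp_surj ((π : ZMod (p ^ n) →+ ZMod p).compLeft ι)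
      (fun v => ⟨fun i => σ (v i), by ext i; exact hσ _⟩)
    refine ⟨κ₂ * D / κ₁ ^ Fintype.card ι, by positivity, fun a ha => ?_⟩
    have e1 : ∑ t : ZMod (p ^ n), ZMod.stdAddChar (a * ((p : ZMod (p ^ n)) ^ (2 * m) * (t * t))) =
        κ₁ * ∑ t : ZMod p, χ' (π a * (t * t)) := by
      rw [← h1]
      refine Finset.sum_congr rfl fun t _ => ?_
      simp only [AddMonoidHom.coe_coe]
      rw [← map_mul, ← map_mul, hχ']
      congr 1
      ring
    have e2 : ∑ z : R, ZMod.stdAddChar (a * ((p : ZMod (p ^ n)) ^ (2 * m) *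
          Algebra.trace (ZMod (p ^ n)) R (z * z))) =
        κ₂ * ∑ v : ι → ZMod p, χ' (π a * (∑ i, ∑ j, v i * B i j * v j)) := by
      rw [← h2, ← Fintype.sum_equiv b.equivFun.symm.toEquiv _ _ (fun v => rfl)]
      refine Finset.sum_congr rfl fun v _ => ?_
      have e3 : (∑ i, ∑ j, ((π : ZMod (p ^ n) →+ ZMod p).compLeft ι) v i * B i j *
          ((π : ZMod (p ^ n) →+ ZMod p).compLeft ι) v j) =
          π (∑ i, ∑ j, v i * Algebra.traceMatrix _ b i j * v j) := by
        simp only [map_sum, map_mul]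
        rfl
      rw [e3, ← map_mul π, hχ']
      congr 1
      change a * (_ * Algebra.trace (ZMod (p ^ n)) R (b.equivFun.symm v * b.equivFun.symm v)) = _
      rw [trace_sq]
      ring
    rw [e1, e2, hDa _ (ha.map π).ne_zero, mul_pow]
    field_simp

lemma main_ge_two (hodd : Odd p) (hn2 : 2 ≤ n)
    {R : Type*} [CommRing R] [Algebra (ZMod (p ^ n)) R] [Fintype R]
    {ι : Type*} [Fintype ι] [DecidableEq ι] (b : Module.Basis ι (ZMod (p ^ n)) R)
    (hdet : IsUnit (Algebra.traceMatrix (ZMod (p ^ n)) b).det) :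
    ∃ C : ℂ, C ≠ 0 ∧ ∀ ψ : DirichletCharacter ℂ (p ^ n), ψ.IsPrimitive →
      Gs (ZMod (p ^ n)) R ψ ZMod.stdAddChar =
        C * (Gs (ZMod (p ^ n)) (ZMod (p ^ n)) ψ ZMod.stdAddChar) ^ Fintype.card ι := by
  classical
  obtain ⟨m, ε, hm, hε, hn⟩ : ∃ m ε : ℕ, 1 ≤ m ∧ ε ≤ 1 ∧ n = 2 * m + ε :=
    ⟨n / 2, n % 2, by omega, by omega, by omega⟩
  obtain ⟨h, hh⟩ : ∃ h : ZMod (p ^ n), 2 * h = 1 := by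
    have : IsUnit ((2 : ℕ) : ZMod (p ^ n)) := by
      rw [ZMod.isUnit_iff_coprime]
      exact (Nat.coprime_two_left.mpr hodd.pow)
    obtain ⟨h, hh⟩ := this.exists_right_inv
    exact ⟨h, by simpa using hh⟩
  have hhu : IsUnit h := IsUnit.of_mul_eq_one 2 (by rw [mul_comm]; exact hh)
  obtain ⟨D, hD, hDa⟩ := quad_local p n hodd m ε hm hε hn b hdet
  have hPn : (p : ZMod (p ^ n)) ^ (2 * m + ε) = 0 := P_pow_zero p n (by omega)
  set κR : ℂ := ((Finset.univ.filter (fun z : R => (p : ZMod (p ^ n)) ^ m • z = 0)).card : ℂ)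
    with hκR
  set κZ : ℂ := ((Finset.univ.filter
    (fun z : ZMod (p ^ n) => (p : ZMod (p ^ n)) ^ m • z = 0)).card : ℂ) with hκZ
  have hR0 : κR ≠ 0 := by
    rw [hκR, Nat.cast_ne_zero]
    exact (Finset.card_pos.mpr ⟨0, by simp⟩).ne'
  have hZ0 : κZ ≠ 0 := by
    rw [hκZ, Nat.cast_ne_zero]
    exact (Finset.card_pos.mpr ⟨0, by simp⟩).ne'
  refine ⟨D * κZ ^ Fintype.card ι / κR, by positivity, fun ψ hψ => ?_⟩
  obtain ⟨c, hc, hψc⟩ := exists_c p n m ε hm hε hn h hh ψ hψ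
  have h1 := local_sum b (p : ZMod (p ^ n)) h hh m ε hm (by omega) hPn c hc ψ ZMod.stdAddChar hψc
    (by
      intro x hx
      by_contra hcon
      push Not at hcon
      apply hx
      apply trace_nondeg b hdet
      intro y
      apply std_eq_zero
      intro s
      have := hcon (s • y)
      rw [mul_smul_comm, map_smul, smul_eq_mul, mul_comm] at this
      exact this)
    (by
      intro x hx
      have : ∀ i, ∃ w, b.equivFun x i = (p : ZMod (p ^ n)) ^ m * w := by
        intro i
        apply ann_Z p n (j := m + ε) (by omega)
        have := congrArg (fun x => b.equivFun x i) hx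
        simpa using this
      choose w hw using this
      refine ⟨b.equivFun.symm w, ?_⟩
      apply b.equivFun.injective
      rw [map_smul, LinearEquiv.apply_symm_apply]
      ext i
      rw [hw]
      rfl)
  have h2 := local_sum (Module.Basis.singleton Unit (ZMod (p ^ n))) (p : ZMod (p ^ n)) h hh m ε hm
    (by omega) hPn c hc ψ ZMod.stdAddChar hψc
    (by
      intro x hx
      by_contra hcon
      push Not at hcon
      apply hx
      apply std_eq_zero
      intro y
      simpa [Algebra.trace_self_apply] using hcon y)
    (by
      intro x hx
      exact ann_Z p n (j := m + ε) (by omega) x hx)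
  simp only [Algebra.trace_self_apply] at h2
  rw [Fintype.card_unit, pow_one] at h2
  have h3 := hDa (-c * h) (hc.neg.mul hhu)
  rw [h3] at h1
  rw [← hκR] at h1
  rw [← hκZ] at h2
  have h4 : κR * Gs (ZMod (p ^ n)) R ψ ZMod.stdAddChar =
      D * (κZ * Gs (ZMod (p ^ n)) (ZMod (p ^ n)) ψ ZMod.stdAddChar) ^ Fintype.card ι := by
    rw [h1, h2, mul_pow]; ring
  rw [mul_pow] at h4
  field_simp
  linear_combination h4
end
end LOC

namespace LOC
open HD QF

lemma main_one (p : ℕ) [hp : Fact p.Prime]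
    {R : Type*} [CommRing R] [Algebra (ZMod (p ^ 1)) R] [Fintype R]
    {ι : Type*} [Fintype ι] [DecidableEq ι] (b : Module.Basis ι (ZMod (p ^ 1)) R)
    (hdet : IsUnit (Algebra.traceMatrix (ZMod (p ^ 1)) b).det) :
    ∃ C : ℂ, C ≠ 0 ∧ ∀ ψ : DirichletCharacter ℂ (p ^ 1), 
      Gs (ZMod (p ^ 1)) R ψ ZMod.stdAddChar =
        C * (Gs (ZMod (p ^ 1)) (ZMod (p ^ 1)) ψ ZMod.stdAddChar) ^ Fintype.card ι := by
  haveI : Fact (p ^ 1).Prime := ⟨by rw [pow_one]; exact hp.out⟩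
  haveI : IsReduced R := by
    refine ⟨fun x hx => ?_⟩
    apply trace_nondeg b hdet
    intro y
    have h1 : IsNilpotent (x * y) := (Commute.all x y).isNilpotent_mul_right hx
    exact (Algebra.isNilpotent_trace_of_isNilpotent h1).eq_zero
  obtain ⟨k, hk⟩ := Good.reduced (F := ZMod (p ^ 1)) (R := R)
  refine ⟨(-1) ^ k, by simp, fun ψ => ?_⟩
  rw [← Module.finrank_eq_card_basis b]
  apply hk
  by_contra hcon
  push Not at hcon
  have := std_eq_zero (1 : ZMod (p ^ 1)) (fun s => hcon _)
  exact one_ne_zero this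

lemma isUnit_of_norm {Z R : Type*} [CommRing Z] [CommRing R] [Algebra Z R]
    {ι : Type*} [Fintype ι] [DecidableEq ι] (b : Module.Basis ι Z R) (x : R)
    (hx : IsUnit (Algebra.norm Z x)) : IsUnit x := by
  rw [Algebra.norm_eq_matrix_det b, ← Matrix.isUnit_iff_isUnit_det] at hx
  obtain ⟨N, hN⟩ := hx.exists_right_inv
  have : (Algebra.leftMulMatrix b x).mulVec (N.mulVec (b.equivFun 1)) = b.equivFun 1 := by
    rw [Matrix.mulVec_mulVec, hN, Matrix.one_mulVec]
  apply IsUnit.of_mul_eq_one (b.equivFun.symm (N.mulVec (b.equivFun 1)))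
  apply b.equivFun.injective
  refine Eq.trans ?_ this
  have h2 := Algebra.leftMulMatrix_mulVec_repr b x (b.equivFun.symm (N.mulVec (b.equivFun 1)))
  have h3 : ∀ y, (b.repr y : ι → Z) = b.equivFun y := fun y => rfl
  rw [h3, h3, LinearEquiv.apply_symm_apply] at h2
  exact h2.symm

lemma units_sum {Z R : Type*} [CommRing Z] [CommRing R] [Algebra Z R]
    {ι : Type*} [Fintype ι] [DecidableEq ι] (b : Module.Basis ι Z R) (ψ : MulChar Z ℂ)
    (χ : AddChar Z ℂ) :
    ∑ᶠ α : Rˣ, ψ (Algebra.norm Z (α : R)) * χ (Algebra.trace Z R (α : R)) = Gs Z R ψ χ := by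
  unfold Gs
  rw [← finsum_mem_range (f := fun x : R => ψ (Algebra.norm Z x) * χ (Algebra.trace Z R x))
    Units.val_injective]
  refine finsum_congr fun x => ?_
  by_cases hx : IsUnit x
  · obtain ⟨u, rfl⟩ := hx
    simp
  · have : ψ (Algebra.norm Z x) = 0 := ψ.map_nonunit fun h => hx (isUnit_of_norm b x h)
    simp [this]

lemma exists_basis {O : Type*} [CommRing O] {ι : Type*} [Fintype ι] [DecidableEq ι]
    (b : Module.Basis ι ℤ O) (M : ℕ) [NeZero M] :
    ∃ (_ : Algebra (ZMod M) (O ⧸ Ideal.span {(M : O)}))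
      (c : Module.Basis ι (ZMod M) (O ⧸ Ideal.span {(M : O)})),
      (∀ x : O, Algebra.norm (ZMod M) (Ideal.Quotient.mk (Ideal.span {(M : O)}) x) =
        ((Algebra.norm ℤ x : ℤ) : ZMod M)) ∧
      (∀ x : O, Algebra.trace (ZMod M) _ (Ideal.Quotient.mk (Ideal.span {(M : O)}) x) =
        ((Algebra.trace ℤ O x : ℤ) : ZMod M)) ∧
      (Algebra.traceMatrix (ZMod M) c).det = (((Algebra.discr ℤ b : ℤ)) : ZMod M) := by
  set I := Ideal.span {(M : O)} with hI
  set π := Ideal.Quotient.mk I with hπ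
  have hM : π (M : O) = 0 := Ideal.Quotient.eq_zero_iff_mem.mpr (Ideal.mem_span_singleton_self _)
  let φ : ZMod M →+* O ⧸ I := (Ideal.Quotient.lift (Ideal.span {(M : ℤ)}) (Int.castRingHom (O ⧸ I))
    (by
      intro a ha
      obtain ⟨k, rfl⟩ := Ideal.mem_span_singleton.mp ha
      rw [map_mul]
      have : (Int.castRingHom (O ⧸ I)) (M : ℤ) = 0 := by
        rw [← hM]
        simp
      rw [this, zero_mul])).comp
    (Int.quotientSpanNatEquivZMod M).symm.toRingHom
  letI alg : Algebra (ZMod M) (O ⧸ I) := φ.toAlgebra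
  have hsm : ∀ (k : ℤ) (x : O), ((k : ℤ) : ZMod M) • π x = π (k • x) := by
    intro k x
    rw [Algebra.smul_def, map_intCast, zsmul_eq_mul, map_mul, map_intCast]
  have hli : LinearIndependent (ZMod M) (fun i => π (b i)) := by
    rw [Fintype.linearIndependent_iff]
    intro v hv i
    have : ∀ i, ∃ k : ℤ, (k : ZMod M) = v i := fun i => ⟨_, ZMod.intCast_zmod_cast _⟩
    choose k hk using this
    simp only [← hk, hsm] at hv
    rw [← map_sum, Ideal.Quotient.eq_zero_iff_mem, hI, Ideal.mem_span_singleton] at hv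
    obtain ⟨y, hy⟩ := hv
    have h1 := congrArg (fun x => b.equivFun x i) hy
    have h2 : b.equivFun (∑ i, k i • b i) = k := by
      rw [← Module.Basis.equivFun_symm_apply, LinearEquiv.apply_symm_apply]
    have h3 : (M : O) * y = (M : ℤ) • y := by simp
    simp only [h2, h3, map_smul, Pi.smul_apply, smul_eq_mul] at h1
    rw [← hk, h1]
    simp
  have hexp : ∀ x : O, π x = ∑ i, ((b.repr x i : ℤ) : ZMod M) • π (b i) := by
    intro x
    conv_lhs => rw [← b.sum_repr x]
    rw [map_sum]
    exact Finset.sum_congr rfl fun i _ => (hsm _ _).symm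
  have hsp : ⊤ ≤ Submodule.span (ZMod M) (Set.range fun i => π (b i)) := by
    intro y _
    obtain ⟨x, rfl⟩ := Ideal.Quotient.mk_surjective y
    rw [← hπ, hexp x]
    exact Submodule.sum_mem _ fun i _ => Submodule.smul_mem _ _
      (Submodule.subset_span ⟨i, rfl⟩)
  let c : Module.Basis ι (ZMod M) (O ⧸ I) := Module.Basis.mk hli hsp
  have hc : ∀ i, c i = π (b i) := fun i => Module.Basis.mk_apply hli hsp i
  have hrepr : ∀ x i, c.repr (π x) i = ((b.repr x i : ℤ) : ZMod M) := by
    intro x i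
    rw [hexp x]
    simp only [← hc]
    rw [Module.Basis.repr_sum_self]
  have hmat : ∀ x, Algebra.leftMulMatrix c (π x) =
      (Algebra.leftMulMatrix b x).map (Int.castRingHom (ZMod M)) := by
    intro x
    ext i j
    rw [Matrix.map_apply, Algebra.leftMulMatrix_eq_repr_mul, Algebra.leftMulMatrix_eq_repr_mul,
      hc, ← map_mul, hrepr]
    rfl
  have htr : ∀ x : O, Algebra.trace (ZMod M) _ (π x) = ((Algebra.trace ℤ O x : ℤ) : ZMod M) := by
    intro x
    rw [Algebra.trace_eq_matrix_trace c, Algebra.trace_eq_matrix_trace b, hmat]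
    simp [Matrix.trace]
  refine ⟨alg, c, fun x => ?_, htr, ?_⟩
  · rw [Algebra.norm_eq_matrix_det c, Algebra.norm_eq_matrix_det b, hmat, ← RingHom.mapMatrix_apply,
      ← RingHom.map_det]
    rfl
  · rw [Algebra.discr_def]
    have : Algebra.traceMatrix (ZMod M) c =
        (Algebra.traceMatrix ℤ b).map (Int.castRingHom (ZMod M)) := by
      ext i j
      simp only [Matrix.map_apply, Algebra.traceMatrix_apply, Algebra.traceForm_apply]
      rw [hc, hc, ← map_mul, htr]
      rfl
    rw [this, ← RingHom.mapMatrix_apply, ← RingHom.map_det]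
    rfl

lemma e_eq {M : ℕ} [NeZero M] (a : ZMod M) : e ((a.val : ℂ) / M) = ZMod.stdAddChar a := by
  have h := ZMod.stdAddChar_coe (N := M) (a.val : ℤ)
  rw [Int.cast_natCast, ZMod.natCast_zmod_val] at h
  rw [h, e]
  congr 1
  push_cast
  ring

lemma tau_eq {M : ℕ} [NeZero M] (ψ : DirichletCharacter ℂ M) :
    tau ψ = Gs (ZMod M) (ZMod M) ψ ZMod.stdAddChar := by
  rw [Gs_self, tau, finsum_eq_sum_of_fintype]
  simp only [e_eq]

lemma mk_rep {R : Type*} [CommRing R] {I : Ideal R} (x : R ⧸ I) :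
    Ideal.Quotient.mk I (rep x) = x :=
  Function.surjInv_eq _ _

end LOC

theorem stmt9 (K : Type*) [Field K] [NumberField K]
    (htotreal : ∀ v : NumberField.InfinitePlace K, v.IsReal)
    [IsGalois ℚ K] (hsolv : IsSolvable (K ≃ₐ[ℚ] K))
    (d : ℕ) (hd : Module.finrank ℚ K = d)
    (p : ℕ) [Fact p.Prime] (hodd : Odd p)
    (hpdK : ¬ (p : ℤ) ∣ NumberField.discr K)
    (n : ℕ) (hn : 1 ≤ n) :
    ∃ C : ℂ, C ≠ 0 ∧ ∀ ψ : DirichletCharacter ℂ (p ^ n), ψ.IsPrimitive →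
      tauN K (p ^ n) ψ = C * ψ ((NumberField.discr K : ZMod (p ^ n))) * tau ψ ^ d := by
  classical
  have hp : p.Prime := Fact.out
  obtain ⟨alg, c, hnorm, htrace, hdet⟩ :=
    LOC.exists_basis (NumberField.RingOfIntegers.basis K) (p ^ n)
  rw [NumberField.discr_eq_discr] at hdet
  have hdet' : IsUnit (Algebra.traceMatrix (ZMod (p ^ n)) c).det := by
    rw [hdet, ZMod.coe_int_isUnit_iff_isCoprime]
    push_cast
    apply IsCoprime.pow_left
    exact (Int.isCoprime_iff_gcd_eq_one.mpr (by
      rw [Int.gcd_eq_natAbs, Int.natAbs_natCast]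
      exact (Nat.Prime.coprime_iff_not_dvd hp).mpr fun h => hpdK (Int.natCast_dvd.mpr h)))
  haveI : Finite (NumberField.RingOfIntegers K ⧸
      Ideal.span {((p ^ n : ℕ) : NumberField.RingOfIntegers K)}) :=
    Finite.of_equiv _ c.equivFun.symm.toEquiv
  haveI := Fintype.ofFinite (NumberField.RingOfIntegers K ⧸
      Ideal.span {((p ^ n : ℕ) : NumberField.RingOfIntegers K)})
  have hcard : Fintype.card (Module.Free.ChooseBasisIndex ℤ (NumberField.RingOfIntegers K)) = d := by
    rw [← Module.finrank_eq_card_basis (NumberField.RingOfIntegers.basis K),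
      NumberField.RingOfIntegers.rank, hd]
  obtain ⟨C, hC, hCψ⟩ : ∃ C : ℂ, C ≠ 0 ∧ ∀ ψ : DirichletCharacter ℂ (p ^ n), ψ.IsPrimitive →
      HD.Gs (ZMod (p ^ n)) (NumberField.RingOfIntegers K ⧸
      Ideal.span {((p ^ n : ℕ) : NumberField.RingOfIntegers K)}) ψ ZMod.stdAddChar =
        C * (HD.Gs (ZMod (p ^ n)) (ZMod (p ^ n)) ψ ZMod.stdAddChar) ^ d := by
    rw [← hcard]
    rcases Nat.lt_or_ge n 2 with h | h
    · obtain rfl : n = 1 := by omega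
      obtain ⟨C, hC, hCψ⟩ := LOC.main_one p c hdet'
      exact ⟨C, hC, fun ψ _ => hCψ ψ⟩
    · exact LOC.main_ge_two p n hodd h c hdet'
  refine ⟨C, hC, fun ψ hψ => ?_⟩
  rw [LOC.tau_eq, mul_assoc, mul_left_comm, ← hCψ ψ hψ, ← LOC.units_sum c, tauN]
  congr 1
  refine finsum_congr fun α => ?_
  rw [LOC.e_eq, ← hnorm, ← htrace, LOC.mk_rep]
end
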